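/- arXiv:2211.03655 — 2 statements merged into one kernel-verified Lean document; each statement's English description precedes it below -/
import Mathlib

section
/- Let q ≥ 2, let 1 < α < β, and set r = √(α/β). For every holomorphic f on the unit disk 𝔻 with ∫_𝔻 |f(z)|^q dA_β(z) < ∞, one has ((α−1)/π) ∫_𝔻 |f(rz)|^q (1−|z|²)^{α−2} dA(z) ≤ ((β−1)/π) ∫_𝔻 |f(z)|^q (1−|z|²)^{β−2} dA(z). -/
open MeasureTheory Metric

noncomputable def Am (a : ℂ → ℝ) (ρ : ℝ) : ℝ :=
  ∫ θ in (-Real.pi)..Real.pi, a (ρ * Complex.exp (θ * Complex.I))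

lemma norm_pt (ρ θ : ℝ) : ‖(ρ : ℂ) * Complex.exp (θ * Complex.I)‖ = |ρ| := by
  simp [Complex.norm_exp_ofReal_mul_I]

lemma pt_mem {ρ : ℝ} (θ : ℝ) (h0 : 0 ≤ ρ) (h1 : ρ < 1) :
    (ρ : ℂ) * Complex.exp (θ * Complex.I) ∈ ball (0 : ℂ) 1 := by
  rw [mem_ball_zero_iff, norm_pt, abs_of_nonneg h0]; exact h1

lemma cont_slice {a : ℂ → ℝ} (ha : ContinuousOn a (ball 0 1)) {ρ : ℝ} (h0 : 0 ≤ ρ) (h1 : ρ < 1) :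
    Continuous fun θ : ℝ => a (ρ * Complex.exp (θ * Complex.I)) :=
  ha.comp_continuous (by fun_prop) (fun θ => pt_mem θ h0 h1)

lemma Am_cont {a : ℂ → ℝ} (ha : ContinuousOn a (ball 0 1)) : ContinuousOn (Am a) (Set.Ico 0 1) := by
  intro x hx
  obtain ⟨R, hR1, hR2⟩ := exists_between hx.2
  have hR0 : 0 ≤ R := hx.1.trans hR1.le
  have hc : Continuous fun ρ : ℝ => Am a (max 0 (min R ρ)) := by
    unfold Am
    apply intervalIntegral.continuous_parametric_intervalIntegral_of_continuous'
    apply ha.comp_continuous (by fun_prop)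
    rintro ⟨ρ, θ⟩
    apply pt_mem
    · simp
    · simp; exact Or.inl hR2
  have h2 : ContinuousWithinAt (fun ρ : ℝ => Am a (max 0 (min R ρ))) (Set.Ico 0 1) x :=
    hc.continuousWithinAt
  refine h2.congr_of_eventuallyEq ?_ ?_
  · filter_upwards [self_mem_nhdsWithin, mem_nhdsWithin_of_mem_nhds (Iio_mem_nhds hR1)] with y hy hy2
    rw [min_eq_right (le_of_lt hy2), max_eq_right hy.1]
  · rw [min_eq_right hR1.le, max_eq_right hx.1]

lemma Am_deriv {a b : ℂ → ℝ} (ha : ContinuousOn a (ball 0 1)) (hb : ContinuousOn b (ball 0 1))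
    (hd : ∀ z ∈ ball (0 : ℂ) 1, HasDerivAt (fun s : ℝ => a (z * Complex.exp (s * 1))) (b z) 0)
    {ρ : ℝ} (h0 : 0 < ρ) (h1 : ρ < 1) :
    HasDerivAt (Am a) (Am b ρ / ρ) ρ := by
  obtain ⟨R, hR1, hR2⟩ := exists_between h1
  obtain ⟨C, hC⟩ := (isCompact_closedBall (0 : ℂ) R).exists_bound_of_continuousOn
    (hb.mono (closedBall_subset_ball hR2))
  have key := intervalIntegral.hasDerivAt_integral_of_dominated_loc_of_deriv_le
    (μ := volume) (a := -Real.pi) (b := Real.pi)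
    (F := fun (ρ : ℝ) (θ : ℝ) => a (ρ * Complex.exp (θ * Complex.I)))
    (F' := fun (ρ : ℝ) (θ : ℝ) => b (ρ * Complex.exp (θ * Complex.I)) / ρ) (x₀ := ρ) (s := Set.Ioo (ρ/2) R)
    (bound := fun _ => C / (ρ/2)) (Ioo_mem_nhds (by linarith) hR1) ?_ ?_ ?_ ?_ ?_ ?_
  · have := key.2
    rw [intervalIntegral.integral_div] at this
    exact this
  · filter_upwards [Ioo_mem_nhds h0 h1] with x hx
    exact (cont_slice ha hx.1.le hx.2).aestronglyMeasurable
  · exact (cont_slice ha h0.le h1).intervalIntegrable _ _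
  · exact ((cont_slice hb h0.le h1).div_const _).aestronglyMeasurable
  · refine Filter.Eventually.of_forall fun θ _ x hx => ?_
    have hx0 : 0 < x := by linarith [hx.1]
    rw [norm_div, Real.norm_of_nonneg hx0.le]
    have h3 := hC (x * Complex.exp (θ * Complex.I)) (by
      rw [mem_closedBall_zero_iff, norm_pt, abs_of_pos hx0]; exact hx.2.le)
    exact div_le_div₀ ((norm_nonneg _).trans h3) h3 (by linarith) hx.1.le
  · exact intervalIntegrable_const
  · refine Filter.Eventually.of_forall fun θ _ x hx => ?_
    have hx0 : 0 < x := by linarith [hx.1]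
    have h4 := hd _ (pt_mem θ hx0.le (hx.2.trans hR2))
    have h5 : HasDerivAt (fun y : ℝ => Real.log (y / x)) (1 / x) x := by
      have := ((hasDerivAt_id x).div_const x).log (by simp [hx0.ne'])
      simpa [hx0.ne'] using this
    have h6 : Real.log (x / x) = 0 := by simp [hx0.ne']
    rw [← h6] at h4
    have h7 := HasDerivAt.comp x h4 h5
    rw [mul_one_div] at h7
    refine h7.congr_of_eventuallyEq ?_
    filter_upwards [Ioi_mem_nhds hx0] with y hy
    have hy : 0 < y := hy
    simp only [Function.comp]
    rw [mul_one, ← Complex.ofReal_exp, Real.exp_log (div_pos hy hx0)]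
    congr 1
    push_cast
    field_simp [hx0.ne']

lemma Am_ang {a e : ℂ → ℝ} (he : ContinuousOn e (ball 0 1))
    (hd : ∀ z ∈ ball (0 : ℂ) 1, HasDerivAt (fun s : ℝ => a (z * Complex.exp (s * Complex.I))) (e z) 0)
    {ρ : ℝ} (h0 : 0 ≤ ρ) (h1 : ρ < 1) : Am e ρ = 0 := by
  unfold Am
  rw [intervalIntegral.integral_eq_sub_of_hasDerivAt
    (f := fun θ : ℝ => a (ρ * Complex.exp (θ * Complex.I))) _
    ((cont_slice he h0 h1).intervalIntegrable _ _)]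
  · push_cast
    rw [show (-(Real.pi:ℂ) * Complex.I) = -(Real.pi * Complex.I) by ring, Complex.exp_neg,
      Complex.exp_pi_mul_I]
    norm_num
  · intro θ _
    have h4 := hd _ (pt_mem θ h0 h1)
    rw [← sub_self θ] at h4
    have h7 := HasDerivAt.comp (h := fun y : ℝ => y - θ) θ h4 ((hasDerivAt_id θ).sub_const θ)
    rw [mul_one] at h7
    refine h7.congr_of_eventuallyEq (Filter.Eventually.of_forall fun y => ?_)
    simp only [Function.comp, id]
    rw [mul_assoc, ← Complex.exp_add]
    congr 3
    push_cast; ring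

lemma Am_add {a b : ℂ → ℝ} (ha : ContinuousOn a (ball 0 1)) (hb : ContinuousOn b (ball 0 1))
    {ρ : ℝ} (h0 : 0 ≤ ρ) (h1 : ρ < 1) : Am (fun z => a z + b z) ρ = Am a ρ + Am b ρ :=
  intervalIntegral.integral_add ((cont_slice ha h0 h1).intervalIntegrable _ _)
    ((cont_slice hb h0 h1).intervalIntegrable _ _)

lemma Am_nonneg {a : ℂ → ℝ} (ha : ∀ z ∈ ball (0 : ℂ) 1, 0 ≤ a z)
    {ρ : ℝ} (h0 : 0 ≤ ρ) (h1 : ρ < 1) : 0 ≤ Am a ρ :=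
  intervalIntegral.integral_nonneg (by linarith [Real.pi_pos]) fun θ _ => ha _ (pt_mem θ h0 h1)

lemma Am_zero {a : ℂ → ℝ} (h : a 0 = 0) : Am a 0 = 0 := by
  simp [Am, h]

/-- polar coordinates -/
lemma polar_red {a : ℂ → ℝ} {w : ℝ → ℝ} (ha : ContinuousOn a (ball 0 1))
    (hw : ContinuousOn w (Set.Ico 0 1))
    (hi : IntegrableOn (fun z => a z * w ‖z‖) (ball (0 : ℂ) 1)) :
    IntegrableOn (fun ρ => ρ * w ρ * Am a ρ) (Set.Ioo 0 1) ∧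
    ∫ z in ball (0 : ℂ) 1, a z * w ‖z‖ = ∫ ρ in Set.Ioo 0 1, ρ * w ρ * Am a ρ := by
  classical
  set F : ℂ → ℝ := (ball (0 : ℂ) 1).indicator (fun z => a z * w ‖z‖) with hF
  have hFc : ContinuousOn (fun z => a z * w ‖z‖) (ball (0 : ℂ) 1) := by
    refine ha.mul (hw.comp continuous_norm.continuousOn ?_)
    intro z hz
    exact ⟨norm_nonneg _, by simpa using hz⟩
  have hFm : Measurable F := by
    rw [hF, ← Set.piecewise_eq_indicator]
    exact hFc.measurable_piecewise continuousOn_const measurableSet_ball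
  have hFi : Integrable F := by
    rw [hF, integrable_indicator_iff measurableSet_ball]; exact hi
  have hsm : Measurable fun p : ℝ × ℝ => Complex.polarCoord.symm p := by
    simp only [Complex.polarCoord_symm_apply]
    fun_prop
  have hGi : IntegrableOn (fun p : ℝ × ℝ => p.1 • F (Complex.polarCoord.symm p))
      (Set.Ioi (0 : ℝ) ×ˢ Set.Ioo (-Real.pi) Real.pi) := by
    refine ⟨(measurable_fst.smul (hFm.comp hsm)).aestronglyMeasurable, ?_⟩
    have h1 := Complex.lintegral_comp_polarCoord_symm (fun z => ‖F z‖ₑ)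
    have h2 : (∫⁻ z, ‖F z‖ₑ) < ⊤ := hFi.2
    rw [← h1] at h2
    refine lt_of_le_of_lt (le_of_eq ?_) h2
    refine setLIntegral_congr_fun (measurableSet_Ioi.prod measurableSet_Ioo) fun p hp => ?_
    have : 0 < p.1 := hp.1
    simp only [smul_eq_mul, enorm_mul]
    rw [Real.enorm_of_nonneg this.le]
  have hGi' := hGi
  rw [IntegrableOn, Measure.volume_eq_prod, ← Measure.prod_restrict] at hGi'
  have hI1 := hGi'.integral_prod_left
  have hslice : ∀ ρ ∈ Set.Ioi (0 : ℝ), (∫ θ in Set.Ioo (-Real.pi) Real.pi,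
      ρ • F (Complex.polarCoord.symm (ρ, θ))) =
      (Set.Ioo (0:ℝ) 1).indicator (fun ρ => ρ * w ρ * Am a ρ) ρ := by
    intro ρ hρ
    have hρ : 0 < ρ := hρ
    have hp : ∀ θ : ℝ, Complex.polarCoord.symm (ρ, θ) = ρ * Complex.exp (θ * Complex.I) := by
      intro θ
      rw [Complex.polarCoord_symm_apply, Complex.exp_mul_I]; push_cast; rfl
    simp only [hp, hF]
    by_cases h1 : ρ < 1
    · rw [Set.indicator_of_mem (show ρ ∈ Set.Ioo (0:ℝ) 1 from ⟨hρ, h1⟩), Am,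
        intervalIntegral.integral_of_le (by linarith [Real.pi_pos]),
        ← integral_Ioc_eq_integral_Ioo, ← integral_const_mul]
      congr 1; ext θ
      rw [Set.indicator_of_mem (pt_mem θ hρ.le h1), norm_pt, abs_of_pos hρ, smul_eq_mul]; ring
    · rw [Set.indicator_of_notMem (fun h => h1 h.2)]
      rw [← integral_zero ℝ ℝ (μ := volume.restrict (Set.Ioo (-Real.pi) Real.pi))]
      congr 1; ext θ
      rw [Set.indicator_of_notMem, smul_zero]
      rw [mem_ball_zero_iff, norm_pt, abs_of_pos hρ]; exact h1
  constructor
  · have h3 : IntegrableOn ((Set.Ioo (0:ℝ) 1).indicator (fun ρ => ρ * w ρ * Am a ρ)) (Set.Ioi 0) :=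
      IntegrableOn.congr_fun hI1 hslice measurableSet_Ioi
    have h4 := h3.mono_set (show Set.Ioo (0:ℝ) 1 ⊆ Set.Ioi 0 from Set.Ioo_subset_Ioi_self)
    exact h4.congr_fun (fun x hx => Set.indicator_of_mem hx _) measurableSet_Ioo
  · rw [← integral_indicator measurableSet_ball, ← hF, ← Complex.integral_comp_polarCoord_symm]
    rw [show (polarCoord.target) = Set.Ioi (0 : ℝ) ×ˢ Set.Ioo (-Real.pi) Real.pi from rfl]
    rw [Measure.volume_eq_prod, setIntegral_prod _ (by rw [← Measure.volume_eq_prod]; exact hGi)]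
    rw [setIntegral_congr_fun measurableSet_Ioi hslice,
      setIntegral_indicator measurableSet_Ioo]
    congr 2
    ext x; simp +contextual

def dt (a b : ℂ) : ℝ := a.re * b.re + a.im * b.im

lemma dt_self (a : ℂ) : dt a a = ‖a‖ ^ 2 := by
  rw [← Complex.normSq_eq_norm_sq, Complex.normSq_apply, dt]

lemma dt_nonneg (a : ℂ) : 0 ≤ dt a a := by rw [dt_self]; positivity

lemma dt_deriv {A B : ℝ → ℂ} {A' B' : ℂ} {x : ℝ} (hA : HasDerivAt A A' x) (hB : HasDerivAt B B' x) :
    HasDerivAt (fun s => dt (A s) (B s)) (dt A' (B x) + dt (A x) B') x := by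
  have re : ∀ {C : ℝ → ℂ} {C' : ℂ}, HasDerivAt C C' x → HasDerivAt (fun s => (C s).re) C'.re x :=
    fun h => Complex.reCLM.hasFDerivAt.comp_hasDerivAt x h
  have im : ∀ {C : ℝ → ℂ} {C' : ℂ}, HasDerivAt C C' x → HasDerivAt (fun s => (C s).im) C'.im x :=
    fun h => Complex.imCLM.hasFDerivAt.comp_hasDerivAt x h
  have := ((re hA).fun_mul (re hB)).fun_add ((im hA).fun_mul (im hB))
  refine this.congr_deriv ?_
  simp only [dt]; ring

lemma dt_cont {A B : ℂ → ℂ} {s : Set ℂ} (hA : ContinuousOn A s) (hB : ContinuousOn B s) :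
    ContinuousOn (fun z => dt (A z) (B z)) s := by
  unfold dt
  exact ((Complex.continuous_re.comp_continuousOn hA).mul (Complex.continuous_re.comp_continuousOn hB)).add
    ((Complex.continuous_im.comp_continuousOn hA).mul (Complex.continuous_im.comp_continuousOn hB))

noncomputable def eu (f : ℂ → ℂ) (z : ℂ) : ℂ := z * deriv f z

lemma eu_diff {f : ℂ → ℂ} (hf : DifferentiableOn ℂ f (ball 0 1)) :
    DifferentiableOn ℂ (eu f) (ball 0 1) :=
  differentiableOn_id.mul (hf.deriv isOpen_ball)

lemma path_deriv {f : ℂ → ℂ} (hf : DifferentiableOn ℂ f (ball 0 1)) {z : ℂ} (hz : z ∈ ball (0:ℂ) 1)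
    (v : ℂ) : HasDerivAt (fun s : ℝ => f (z * Complex.exp (s * v))) (v * eu f z) 0 := by
  have h1 : HasDerivAt f (deriv f z) (z * Complex.exp (((0:ℝ):ℂ) * v)) := by
    simpa using (hf.differentiableAt (isOpen_ball.mem_nhds hz)).hasDerivAt
  have h2 : HasDerivAt (fun s : ℝ => z * Complex.exp (s * v)) (z * v) 0 := by
    have h3 : HasDerivAt (fun s : ℝ => (s : ℂ) * v) v 0 := by
      simpa using (Complex.ofRealCLM.hasDerivAt (x := (0:ℝ))).mul_const v
    have := (h3.cexp).const_mul z
    simpa using this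
  have h3 := HasDerivAt.comp (h := fun s : ℝ => z * Complex.exp (s * v)) 0 h1 h2
  refine h3.congr_deriv ?_
  simp only [eu]; ring

section gen
variable (g h : ℂ → ℂ) (K K1 K2 : ℝ → ℝ)

noncomputable def UU (z : ℂ) : ℝ := dt (h z) (h z) * K (dt (g z) (g z))

noncomputable def TT (v z : ℂ) : ℝ :=
  2 * dt (h z) (v * eu h z) * K (dt (g z) (g z)) +
    dt (h z) (h z) * (K1 (dt (g z) (g z)) * (2 * dt (g z) (v * eu g z)))

noncomputable def TT2 (v z : ℂ) : ℝ :=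
  2 * (dt (v * eu h z) (v * eu h z) + dt (h z) (v * (v * eu (eu h) z))) * K (dt (g z) (g z)) +
    2 * (2 * dt (h z) (v * eu h z) * (K1 (dt (g z) (g z)) * (2 * dt (g z) (v * eu g z)))) +
    dt (h z) (h z) * (K2 (dt (g z) (g z)) * (2 * dt (g z) (v * eu g z)) * (2 * dt (g z) (v * eu g z))
      + K1 (dt (g z) (g z)) * (2 * (dt (v * eu g z) (v * eu g z) + dt (g z) (v * (v * eu (eu g) z)))))

noncomputable def LL (z : ℂ) : ℝ :=
  4 * (dt (eu h z) (eu h z) * K (dt (g z) (g z)) +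
    2 * K1 (dt (g z) (g z)) * dt (eu h z * g z) (h z * eu g z) +
    dt (h z) (h z) * dt (eu g z) (eu g z) *
      (K1 (dt (g z) (g z)) + dt (g z) (g z) * K2 (dt (g z) (g z))))

lemma LL_eq (z : ℂ) : TT2 g h K K1 K2 1 z + TT2 g h K K1 K2 Complex.I z = LL g h K K1 K2 z := by
  simp only [TT2, LL]
  generalize K (dt (g z) (g z)) = k
  generalize K1 (dt (g z) (g z)) = k1
  generalize K2 (dt (g z) (g z)) = k2
  simp only [dt, Complex.mul_re, Complex.mul_im, Complex.I_re, Complex.I_im, Complex.one_re, Complex.one_im]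
  ring

lemma LL_nonneg (z : ℂ) (hK : 0 < K (dt (g z) (g z)))
    (hh : dt (g z) (g z) * K1 (dt (g z) (g z)) ^ 2 ≤ K (dt (g z) (g z)) *
      (K1 (dt (g z) (g z)) + dt (g z) (g z) * K2 (dt (g z) (g z)))) : 0 ≤ LL g h K K1 K2 z := by
  unfold LL
  generalize K (dt (g z) (g z)) = k at *
  generalize K1 (dt (g z) (g z)) = k1 at *
  generalize K2 (dt (g z) (g z)) = k2 at *
  refine mul_nonneg (by norm_num) ?_
  refine nonneg_of_mul_nonneg_right (a := k) ?_ hK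
  have e : k * (dt (eu h z) (eu h z) * k + 2 * k1 * dt (eu h z * g z) (h z * eu g z) +
      dt (h z) (h z) * dt (eu g z) (eu g z) * (k1 + dt (g z) (g z) * k2)) =
      dt (k * eu h z + k1 * (starRingEnd ℂ (g z) * (h z * eu g z)))
        (k * eu h z + k1 * (starRingEnd ℂ (g z) * (h z * eu g z))) +
      dt (h z) (h z) * dt (eu g z) (eu g z) *
        (k * (k1 + dt (g z) (g z) * k2) - dt (g z) (g z) * k1 ^ 2) := by
    simp only [dt, Complex.mul_re, Complex.mul_im, Complex.add_re, Complex.add_im, Complex.conj_re,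
      Complex.conj_im, Complex.ofReal_re, Complex.ofReal_im]
    ring
  rw [e]
  exact add_nonneg (dt_nonneg _) (mul_nonneg (mul_nonneg (dt_nonneg _) (dt_nonneg _)) (by linarith))

lemma gen_main (hg : DifferentiableOn ℂ g (ball 0 1)) (hh : DifferentiableOn ℂ h (ball 0 1))
    (hK : ∀ s, 0 ≤ s → HasDerivAt K (K1 s) s) (hK1 : ∀ s, 0 ≤ s → HasDerivAt K1 (K2 s) s)
    (hK2 : ContinuousOn K2 (Set.Ici 0)) :
    ContinuousOn (UU g h K) (ball 0 1) ∧ ContinuousOn (TT g h K K1 1) (ball 0 1) ∧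
    ContinuousOn (LL g h K K1 K2) (ball 0 1) ∧
    (∀ ρ, 0 < ρ → ρ < 1 → HasDerivAt (Am (UU g h K)) (Am (TT g h K K1 1) ρ / ρ) ρ) ∧
    (∀ ρ, 0 < ρ → ρ < 1 → HasDerivAt (Am (TT g h K K1 1)) (Am (LL g h K K1 K2) ρ / ρ) ρ) := by
  have cg := hg.continuousOn
  have ch := hh.continuousOn
  have cg1 := (eu_diff hg).continuousOn
  have ch1 := (eu_diff hh).continuousOn
  have cg2 := (eu_diff (eu_diff hg)).continuousOn
  have ch2 := (eu_diff (eu_diff hh)).continuousOn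
  have cS := dt_cont cg cg
  have cK : ContinuousOn (fun z => K (dt (g z) (g z))) (ball 0 1) :=
    ContinuousOn.comp (t := Set.Ici 0) (fun s hs => (hK s hs).continuousAt.continuousWithinAt) cS
      (fun z _ => dt_nonneg _)
  have cK1 : ContinuousOn (fun z => K1 (dt (g z) (g z))) (ball 0 1) :=
    ContinuousOn.comp (t := Set.Ici 0) (fun s hs => (hK1 s hs).continuousAt.continuousWithinAt) cS
      (fun z _ => dt_nonneg _)
  have cK2 : ContinuousOn (fun z => K2 (dt (g z) (g z))) (ball 0 1) :=
    ContinuousOn.comp (t := Set.Ici 0) hK2 cS (fun z _ => dt_nonneg _)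
  have cc : ∀ v : ℂ, ContinuousOn (fun _ : ℂ => v) (ball (0:ℂ) 1) := fun v => continuousOn_const
  have c2 : ContinuousOn (fun _ : ℂ => (2:ℝ)) (ball (0:ℂ) 1) := continuousOn_const
  have cU : ContinuousOn (UU g h K) (ball 0 1) := (dt_cont ch ch).mul cK
  have cT : ∀ v, ContinuousOn (TT g h K K1 v) (ball 0 1) := fun v =>
    ((c2.mul (dt_cont ch ((cc v).mul ch1))).mul cK).add
      ((dt_cont ch ch).mul (cK1.mul (c2.mul (dt_cont cg ((cc v).mul cg1)))))
  have cT2 : ∀ v, ContinuousOn (TT2 g h K K1 K2 v) (ball 0 1) := by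
    intro v
    have vh := (cc v).mul ch1
    have vg := (cc v).mul cg1
    have d1 := c2.mul (dt_cont ch vh)
    have d2 := c2.mul (dt_cont cg vg)
    have vvh := (cc v).mul ((cc v).mul ch2)
    have vvg := (cc v).mul ((cc v).mul cg2)
    exact (((c2.mul ((dt_cont vh vh).add (dt_cont ch vvh))).mul cK).add
      (c2.mul (d1.mul (cK1.mul d2)))).add
      ((dt_cont ch ch).mul (((cK2.mul d2).mul d2).add
        (cK1.mul (c2.mul ((dt_cont vg vg).add (dt_cont cg vvg))))))
  have cL : ContinuousOn (LL g h K K1 K2) (ball 0 1) := by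
    refine ((cT2 1).add (cT2 Complex.I)).congr fun z _ => ?_
    rw [← LL_eq]; rfl
  have dU : ∀ v : ℂ, ∀ z ∈ ball (0 : ℂ) 1, HasDerivAt (fun s : ℝ => UU g h K (z * Complex.exp (s * v)))
      (TT g h K K1 v z) 0 := by
    intro v z hz
    have pg := path_deriv hg hz v
    have ph := path_deriv hh hz v
    have pS := dt_deriv pg pg
    have e0 : z * Complex.exp (((0:ℝ):ℂ) * v) = z := by simp
    have pK := HasDerivAt.comp (h := fun s : ℝ => dt (g (z * Complex.exp (s * v))) (g (z * Complex.exp (s * v)))) 0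
      (hK _ (dt_nonneg _)) pS
    refine ((dt_deriv ph ph).fun_mul pK).congr_deriv ?_
    simp only [Function.comp, e0, TT]
    rw [show dt (v * eu h z) (h z) = dt (h z) (v * eu h z) by simp only [dt]; ring,
      show dt (v * eu g z) (g z) = dt (g z) (v * eu g z) by simp only [dt]; ring]
    ring
  have dT : ∀ v : ℂ, ∀ z ∈ ball (0 : ℂ) 1, HasDerivAt (fun s : ℝ => TT g h K K1 v (z * Complex.exp (s * v)))
      (TT2 g h K K1 K2 v z) 0 := by
    intro v z hz
    have pg := path_deriv hg hz v
    have ph := path_deriv hh hz v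
    have pg1 := (path_deriv (eu_diff hg) hz v).const_mul v
    have ph1 := (path_deriv (eu_diff hh) hz v).const_mul v
    have pS := dt_deriv pg pg
    have e0 : z * Complex.exp (((0:ℝ):ℂ) * v) = z := by simp
    have pK := HasDerivAt.comp (h := fun s : ℝ => dt (g (z * Complex.exp (s * v))) (g (z * Complex.exp (s * v)))) 0
      (hK _ (dt_nonneg _)) pS
    have pK1 := HasDerivAt.comp (h := fun s : ℝ => dt (g (z * Complex.exp (s * v))) (g (z * Complex.exp (s * v)))) 0
      (hK1 _ (dt_nonneg _)) pS
    refine ((((dt_deriv ph ph1).const_mul 2).fun_mul pK).fun_add ((dt_deriv ph ph).fun_mul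
      (pK1.fun_mul ((dt_deriv pg pg1).const_mul 2)))).congr_deriv ?_
    simp only [Function.comp, e0, TT2]
    rw [show dt (v * eu h z) (h z) = dt (h z) (v * eu h z) by simp only [dt]; ring,
      show dt (v * eu g z) (g z) = dt (g z) (v * eu g z) by simp only [dt]; ring]
    ring
  refine ⟨cU, cT 1, cL, fun ρ h0 h1 => Am_deriv cU (cT 1) (dU 1) h0 h1, fun ρ h0 h1 => ?_⟩
  have := Am_deriv (cT 1) (cT2 1) (dT 1) h0 h1
  have e : Am (LL g h K K1 K2) ρ = Am (TT2 g h K K1 K2 1) ρ := by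
    rw [← show (fun z => TT2 g h K K1 K2 1 z + TT2 g h K K1 K2 Complex.I z) = LL g h K K1 K2 from
      funext (LL_eq g h K K1 K2), Am_add (cT2 1) (cT2 _) h0.le h1,
      Am_ang (cT2 Complex.I) (dT Complex.I) h0.le h1, add_zero]
  rw [e]; exact this

lemma TT_zero : TT g h K K1 1 0 = 0 := by
  simp [TT, eu, dt]

end gen

lemma mono_Ico {φ φ' : ℝ → ℝ} (hc : ContinuousOn φ (Set.Ico 0 1))
    (hd : ∀ x, 0 < x → x < 1 → HasDerivAt φ (φ' x) x) (hp : ∀ x, 0 < x → x < 1 → 0 ≤ φ' x) :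
    MonotoneOn φ (Set.Ico 0 1) := by
  apply monotoneOn_of_deriv_nonneg (convex_Ico 0 1) hc
  · rw [interior_Ico]
    exact fun x hx => (hd x hx.1 hx.2).differentiableAt.differentiableWithinAt
  · rw [interior_Ico]
    intro x hx
    rw [(hd x hx.1 hx.2).deriv]; exact hp x hx.1 hx.2

noncomputable def KA (p ε s : ℝ) : ℝ := (s + ε) ^ p
noncomputable def KA1 (p ε s : ℝ) : ℝ := p * (s + ε) ^ (p - 1)
noncomputable def KA2 (p ε s : ℝ) : ℝ := p * (p - 1) * (s + ε) ^ (p - 2)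
noncomputable def KB (p ε s : ℝ) : ℝ := p * (s + ε) ^ (p - 2) * (p * s + ε)
noncomputable def KB1 (p ε s : ℝ) : ℝ := p * (p - 1) * (s + ε) ^ (p - 3) * (p * s + 2 * ε)
noncomputable def KB2 (p ε s : ℝ) : ℝ := p * (p - 1) * (p - 2) * (s + ε) ^ (p - 4) * (p * s + 3 * ε)

lemma rp_deriv (q ε : ℝ) {s : ℝ} (hs : 0 < s + ε) :
    HasDerivAt (fun s : ℝ => (s + ε) ^ q) (q * (s + ε) ^ (q - 1)) s := by
  have := ((hasDerivAt_id s).add_const ε).rpow_const (p := q) (Or.inl hs.ne')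
  simpa using this

lemma KA_d (p : ℝ) {ε : ℝ} (hε : 0 < ε) (s : ℝ) (hs : 0 ≤ s) : HasDerivAt (KA p ε) (KA1 p ε s) s :=
  rp_deriv p ε (by linarith)

lemma KA1_d (p : ℝ) {ε : ℝ} (hε : 0 < ε) (s : ℝ) (hs : 0 ≤ s) : HasDerivAt (KA1 p ε) (KA2 p ε s) s := by
  refine ((rp_deriv (p-1) ε (by linarith)).const_mul p).congr_deriv ?_
  rw [KA2, show p - 1 - 1 = p - 2 by ring]; ring

lemma rp_succ (q : ℝ) {x : ℝ} (hx : 0 < x) : x ^ q = x ^ (q - 1) * x := by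
  nth_rewrite 3 [← Real.rpow_one x]
  rw [← Real.rpow_add hx]; ring_nf

lemma KB_d (p : ℝ) {ε : ℝ} (hε : 0 < ε) (s : ℝ) (hs : 0 ≤ s) : HasDerivAt (KB p ε) (KB1 p ε s) s := by
  have h := ((rp_deriv (p-2) ε (by linarith : 0 < s + ε)).const_mul p).fun_mul
    (((hasDerivAt_id s).const_mul p).add_const ε)
  refine h.congr_deriv ?_
  rw [KB1, rp_succ (p - 2) (by linarith : 0 < s + ε), show p - 2 - 1 = p - 3 by ring]
  simp only [id]; ring

lemma KB1_d (p : ℝ) {ε : ℝ} (hε : 0 < ε) (s : ℝ) (hs : 0 ≤ s) : HasDerivAt (KB1 p ε) (KB2 p ε s) s := by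
  have h := ((rp_deriv (p-3) ε (by linarith : 0 < s + ε)).const_mul (p*(p-1))).fun_mul
    (((hasDerivAt_id s).const_mul p).add_const (2*ε))
  refine h.congr_deriv ?_
  rw [KB2, rp_succ (p - 3) (by linarith : 0 < s + ε), show p - 3 - 1 = p - 4 by ring]
  simp only [id]; ring

lemma rp_cont (q : ℝ) {ε : ℝ} (hε : 0 < ε) : ContinuousOn (fun s : ℝ => (s + ε) ^ q) (Set.Ici 0) :=
  fun s hs => (rp_deriv q ε (by have : 0 ≤ s := hs; linarith)).continuousAt.continuousWithinAt

lemma KA2_c (p : ℝ) {ε : ℝ} (hε : 0 < ε) : ContinuousOn (KA2 p ε) (Set.Ici 0) :=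
  continuousOn_const.mul (rp_cont _ hε)

lemma KB2_c (p : ℝ) {ε : ℝ} (hε : 0 < ε) : ContinuousOn (KB2 p ε) (Set.Ici 0) :=
  (continuousOn_const.mul (rp_cont _ hε)).mul (by fun_prop)

lemma KA_rel (p : ℝ) {ε : ℝ} (hε : 0 < ε) (s : ℝ) (hs : 0 ≤ s) :
    KA1 p ε s + s * KA2 p ε s = KB p ε s := by
  rw [KA1, KA2, KB, rp_succ (p-1) (by linarith : 0 < s + ε), show p - 1 - 1 = p - 2 by ring]; ring

lemma KB_pos {p : ℝ} (hp : 1 ≤ p) {ε : ℝ} (hε : 0 < ε) (s : ℝ) (hs : 0 ≤ s) : 0 < KB p ε s := by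
  unfold KB; positivity

lemma KB_ineq {p : ℝ} (hp : 1 ≤ p) {ε : ℝ} (hε : 0 < ε) (s : ℝ) (hs : 0 ≤ s) :
    s * KB1 p ε s ^ 2 ≤ KB p ε s * (KB1 p ε s + s * KB2 p ε s) := by
  have hx : 0 < s + ε := by linarith
  rw [KB, KB1, KB2, rp_succ (p-2) hx, show p - 2 - 1 = p - 3 by ring, rp_succ (p-3) hx,
    show p - 3 - 1 = p - 4 by ring]
  have hX : 0 < (s + ε) ^ (p - 4) := Real.rpow_pos_of_pos hx _
  generalize (s + ε) ^ (p - 4) = X at *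
  rw [← sub_nonneg]
  obtain ⟨d, hd, rfl⟩ : ∃ d, 0 ≤ d ∧ p = 1 + d := ⟨p - 1, by linarith, by ring⟩
  have e : ∀ Y : ℝ, Y = (1+d)^2 * d * X^2 * (s+ε)^2 * ε *
     (2*ε^2 + 2*(1+d)*ε*s + (1+d)*d*s^2) → 0 ≤ Y := by
    rintro Y rfl; positivity
  apply e
  ring

lemma struct {f : ℂ → ℂ} (hf : DifferentiableOn ℂ f (ball 0 1)) {p ε : ℝ} (hp : 1 ≤ p) (hε : 0 < ε) :
    ContinuousOn (fun z => (‖f z‖ ^ 2 + ε) ^ p) (ball 0 1) ∧ ∃ c : ℝ → ℝ,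
    ContinuousOn (Am (fun z => (‖f z‖ ^ 2 + ε) ^ p)) (Set.Ico 0 1) ∧
    (∀ ρ, 0 < ρ → ρ < 1 → HasDerivAt (Am (fun z => (‖f z‖ ^ 2 + ε) ^ p)) (ρ * c ρ) ρ) ∧
    MonotoneOn c (Set.Ico 0 1) ∧ ∀ ρ ∈ Set.Ico (0:ℝ) 1, 0 ≤ c ρ := by
  obtain ⟨a1, a2, a3, a4, a5⟩ := gen_main f (fun _ => 1) (KA p ε) (KA1 p ε) (KA2 p ε) hf
    (differentiableOn_const 1) (KA_d p hε) (KA1_d p hε) (KA2_c p hε)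
  obtain ⟨b1, b2, b3, b4, b5⟩ := gen_main f (deriv f) (KB p ε) (KB1 p ε) (KB2 p ε) hf
    (hf.deriv isOpen_ball) (KB_d p hε) (KB1_d p hε) (KB2_c p hε)
  have eU : UU f (fun _ => 1) (KA p ε) = fun z => (‖f z‖ ^ 2 + ε) ^ p := by
    funext z
    simp [UU, KA, dt_self]
  rw [eU] at a1 a4
  set A := Am (TT f (fun _ => 1) (KA p ε) (KA1 p ε) 1) with hA
  set N := Am (UU f (deriv f) (KB p ε)) with hN
  set B := Am (TT f (deriv f) (KB p ε) (KB1 p ε) 1) with hB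
  have hA0 : A 0 = 0 := Am_zero (TT_zero _ _ _ _)
  have hB0 : B 0 = 0 := Am_zero (TT_zero _ _ _ _)
  have cA : ContinuousOn A (Set.Ico 0 1) := Am_cont a2
  have cB : ContinuousOn B (Set.Ico 0 1) := Am_cont b2
  have cN : ContinuousOn N (Set.Ico 0 1) := Am_cont b1
  have z0 : (0:ℝ) ∈ Set.Ico (0:ℝ) 1 := by simp
  have eL : ∀ ρ, 0 < ρ → ρ < 1 → Am (LL f (fun _ => 1) (KA p ε) (KA1 p ε) (KA2 p ε)) ρ = 4 * ρ^2 * N ρ := by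
    intro ρ h0 h1
    rw [hN, Am, Am, ← intervalIntegral.integral_const_mul]
    congr 1; ext θ
    set z := (ρ : ℂ) * Complex.exp (θ * Complex.I) with hz
    have h2 : eu (fun _ : ℂ => (1:ℂ)) z = 0 := by simp [eu]
    have h3 : dt (eu f z) (eu f z) = ρ^2 * dt (deriv f z) (deriv f z) := by
      rw [dt_self, dt_self, eu, norm_mul, hz, norm_pt, mul_pow, sq_abs]
    simp only [LL, UU]
    rw [KA_rel p hε _ (dt_nonneg _), h2, h3]
    simp [dt]; ring
  have hN0 : ∀ ρ, 0 ≤ ρ → ρ < 1 → 0 ≤ N ρ := fun ρ h0 h1 => Am_nonneg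
    (fun z _ => mul_nonneg (dt_nonneg _) (KB_pos hp hε _ (dt_nonneg _)).le) h0 h1
  have dA : ∀ ρ, 0 < ρ → ρ < 1 → HasDerivAt A (4 * ρ * N ρ) ρ := by
    intro ρ h0 h1
    refine (a5 ρ h0 h1).congr_deriv ?_
    rw [eL ρ h0 h1]; field_simp
  have mA := mono_Ico cA dA (fun x h0 h1 => by have := hN0 x h0.le h1; positivity)
  have A_nn : ∀ ρ ∈ Set.Ico (0:ℝ) 1, 0 ≤ A ρ := fun ρ h => by
    rw [← hA0]; exact mA z0 h h.1
  have mB := mono_Ico cB (fun ρ h0 h1 => b5 ρ h0 h1) (fun x h0 h1 =>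
    div_nonneg (Am_nonneg (fun z _ => LL_nonneg _ _ _ _ _ z (KB_pos hp hε _ (dt_nonneg _))
      (KB_ineq hp hε _ (dt_nonneg _))) h0.le h1) h0.le)
  have B_nn : ∀ ρ ∈ Set.Ico (0:ℝ) 1, 0 ≤ B ρ := fun ρ h => by
    rw [← hB0]; exact mB z0 h h.1
  have dQ : ∀ ρ, 0 < ρ → ρ < 1 → HasDerivAt (fun ρ => 4 * ρ^2 * N ρ - 2 * A ρ) (4 * ρ * B ρ) ρ := by
    intro ρ h0 h1
    have := ((((hasDerivAt_id ρ).fun_pow 2).const_mul 4).fun_mul (b4 ρ h0 h1)).fun_sub ((dA ρ h0 h1).const_mul 2)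
    refine this.congr_deriv ?_
    simp only [id]; field_simp; push_cast; ring
  have mQ := mono_Ico (φ := fun ρ => 4 * ρ^2 * N ρ - 2 * A ρ) (by fun_prop) dQ
    (fun x h0 h1 => by have := B_nn x ⟨h0.le, h1⟩; positivity)
  have Q_nn : ∀ ρ ∈ Set.Ico (0:ℝ) 1, 0 ≤ 4 * ρ^2 * N ρ - 2 * A ρ := fun ρ h => by
    have := mQ z0 h h.1
    simpa [hA0] using this
  refine ⟨a1, fun ρ => A ρ / ρ^2, Am_cont a1, fun ρ h0 h1 => ?_, ?_, fun ρ h => div_nonneg (A_nn ρ h) (sq_nonneg _)⟩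
  · refine (a4 ρ h0 h1).congr_deriv ?_
    field_simp
  · have m1 : MonotoneOn (fun ρ => A ρ / ρ^2) (Set.Ioo 0 1) := by
      have dc : ∀ x ∈ Set.Ioo (0:ℝ) 1, HasDerivAt (fun ρ => A ρ / ρ^2)
          ((4 * x^2 * N x - 2 * A x) / x^3) x := by
        intro x hx
        have hx0 := hx.1
        have := (dA x hx.1 hx.2).fun_div ((hasDerivAt_id x).fun_pow 2) (by simp [hx0.ne'])
        refine this.congr_deriv ?_
        simp only [id]; field_simp; push_cast; ring
      apply monotoneOn_of_deriv_nonneg (convex_Ioo 0 1) (fun x hx => (dc x hx).continuousAt.continuousWithinAt)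
      · rw [interior_Ioo]
        exact fun x hx => (dc x hx).differentiableAt.differentiableWithinAt
      · rw [interior_Ioo]
        intro x hx
        rw [(dc x hx).deriv]
        exact div_nonneg (Q_nn x ⟨hx.1.le, hx.2⟩) (pow_nonneg hx.1.le _)
    intro x hx y hy hxy
    rcases hx.1.eq_or_lt with h | h
    · subst h
      simp only
      rw [hA0, zero_div]
      exact div_nonneg (A_nn y hy) (sq_nonneg _)
    · exact m1 ⟨h, hx.2⟩ ⟨h.trans_le hxy, hy.2⟩ hxy

lemma w_deriv {γ : ℝ} {x : ℝ} (hx0 : 0 < x) (hx1 : x < 1) :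
    HasDerivAt (fun ρ : ℝ => -(1 - ρ^2) ^ (γ - 1)) (2 * (γ - 1) * (x * (1 - x^2) ^ (γ - 2))) x := by
  have h1 : 0 < 1 - x^2 := by nlinarith
  have := ((((hasDerivAt_id x).fun_pow 2).const_sub 1).rpow_const (p := γ - 1) (Or.inl (by simpa using h1.ne'))).fun_neg
  refine this.congr_deriv ?_
  simp only [id]
  rw [show γ - 1 - 1 = γ - 2 by ring]
  push_cast; ring

lemma w_cont {γ : ℝ} (hγ : 1 < γ) : Continuous (fun ρ : ℝ => (1 - ρ^2) ^ (γ - 1)) :=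
  (by fun_prop : Continuous fun ρ : ℝ => 1 - ρ^2).rpow_const (fun x => Or.inr (by linarith))

lemma w_int {γ : ℝ} (hγ : 1 < γ) :
    IntervalIntegrable (fun ρ : ℝ => 2 * (γ - 1) * (ρ * (1 - ρ^2) ^ (γ - 2))) volume 0 1 := by
  apply intervalIntegral.intervalIntegrable_deriv_of_nonneg (w_cont hγ).neg.continuousOn
  · intro x hx
    simp at hx
    exact w_deriv hx.1 hx.2
  · intro x hx
    simp at hx
    have h1 : 0 ≤ 1 - x^2 := by nlinarith
    have := hx.1
    have := Real.rpow_nonneg h1 (γ - 2)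
    have : 0 ≤ γ - 1 := by linarith
    positivity

lemma w_int' {γ : ℝ} (hγ : 1 < γ) : IntegrableOn (fun ρ : ℝ => ρ * (1 - ρ^2) ^ (γ - 2)) (Set.Ioo 0 1) := by
  have h := (w_int hγ).const_mul (2 * (γ - 1))⁻¹
  rw [intervalIntegrable_iff_integrableOn_Ioo_of_le zero_le_one] at h
  refine h.congr_fun (fun x _ => ?_) measurableSet_Ioo
  have : γ - 1 ≠ 0 := by linarith
  simp only
  field_simp

lemma ibp {γ : ℝ} (hγ : 1 < γ) {P c : ℝ → ℝ} (hP : ContinuousOn P (Set.Icc 0 1))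
    (hd : ∀ x, 0 < x → x < 1 → HasDerivAt P (x * c x) x) (hc : ∀ x ∈ Set.Icc (0:ℝ) 1, 0 ≤ c x) :
    2 * (γ - 1) * (∫ ρ in (0:ℝ)..1, ρ * (1 - ρ^2) ^ (γ - 2) * P ρ) =
      P 0 + ∫ ρ in (0:ℝ)..1, ρ * c ρ * (1 - ρ^2) ^ (γ - 1) := by
  have hi : IntervalIntegrable (fun x => x * c x) volume 0 1 := by
    apply intervalIntegral.intervalIntegrable_deriv_of_nonneg (g := P)
    · simpa using hP
    · intro x hx; simp at hx; exact hd x hx.1 hx.2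
    · intro x hx; simp at hx; exact mul_nonneg hx.1.le (hc x ⟨hx.1.le, hx.2.le⟩)
  have := intervalIntegral.integral_mul_deriv_eq_deriv_mul_of_hasDerivAt (a := 0) (b := 1) (u := P)
    (v := fun ρ : ℝ => -(1 - ρ^2) ^ (γ - 1)) (by simpa using hP) (w_cont hγ).neg.continuousOn
    (by intro x hx; simp at hx; exact hd x hx.1 hx.2)
    (by intro x hx; simp at hx; exact w_deriv (γ := γ) hx.1 hx.2) hi (w_int hγ)
  rw [← intervalIntegral.integral_const_mul]
  rw [show (fun ρ => 2 * (γ - 1) * (ρ * (1 - ρ^2) ^ (γ - 2) * P ρ)) =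
    fun ρ => P ρ * (2 * (γ - 1) * (ρ * (1 - ρ^2) ^ (γ - 2))) by ext; ring, this]
  simp only [mul_neg, intervalIntegral.integral_neg]
  have h0 : ((0:ℝ)) ^ (γ - 1) = 0 := Real.zero_rpow (by linarith)
  simp [h0]

lemma w_one {γ : ℝ} (hγ : 0 < γ) : ∫ ρ in (0:ℝ)..1, ρ * (1 - ρ^2) ^ (γ - 1) = 1 / (2 * γ) := by
  have h1 : (1:ℝ) < γ + 1 := by linarith
  have := intervalIntegral.integral_eq_sub_of_hasDerivAt_of_le (zero_le_one (α := ℝ))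
    (w_cont h1).neg.continuousOn (fun x hx => w_deriv hx.1 hx.2) (w_int h1)
  rw [intervalIntegral.integral_const_mul] at this
  simp only [Pi.neg_apply] at this
  rw [show γ + 1 - 2 = γ - 1 by ring, show γ + 1 - 1 = γ by ring] at this
  rw [eq_div_iff (by positivity), mul_comm, this]
  simp [hγ.ne']

lemma crossing {α β : ℝ} (hα : 1 < α) (hαβ : α < β) : ∃ t : ℝ, 0 ≤ t ∧ t ≤ 1 ∧ ∀ s, 0 ≤ s → s ≤ 1 →
    (s ≤ t → (1 - s) ^ (β - 1) ≤ (max 0 (1 - s * (β/α))) ^ (α - 1)) ∧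
    (t < s → (max 0 (1 - s * (β/α))) ^ (α - 1) ≤ (1 - s) ^ (β - 1)) := by
  set e := (β - 1) / (α - 1) with he
  have hα1 : 0 < α - 1 := by linarith
  have he1 : 1 ≤ e := by rw [he, le_div_iff₀ hα1]; linarith
  have hH : ∀ s : ℝ, s ≤ 1 → (1 - s) ^ (β - 1) = ((1 - s) ^ e) ^ (α - 1) := by
    intro s hs
    rw [← Real.rpow_mul (by linarith), he]
    congr 1; field_simp
  set ψ : ℝ → ℝ := fun s => (1 - s) ^ e + (s * (β/α) - 1) with hψ
  have cψ : Continuous ψ :=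
    ((by fun_prop : Continuous fun s : ℝ => 1 - s).rpow_const (fun x => Or.inr (by linarith))).add
      (by fun_prop)
  have vψ : ConvexOn ℝ (Set.Icc 0 1) ψ := by
    refine ⟨convex_Icc 0 1, fun x hx y hy a b ha hb hab => ?_⟩
    have := (convexOn_rpow he1).2 (x := 1 - x) (y := 1 - y) (by simpa using hx.2) (by simpa using hy.2) ha hb hab
    simp only [smul_eq_mul] at this
    simp only [hψ, smul_eq_mul]
    have e1 : 1 - (a * x + b * y) = a * (1 - x) + b * (1 - y) := by linear_combination (-1 : ℝ) * hab
    rw [e1]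
    nlinarith
  set S := {s ∈ Set.Icc (0:ℝ) 1 | ψ s ≤ 0} with hS
  have S0 : (0:ℝ) ∈ S := by simp [hS, hψ]
  have Sc : IsCompact S := by
    have : S = Set.Icc 0 1 ∩ ψ ⁻¹' Set.Iic 0 := by ext; simp [hS]
    rw [this]
    exact isCompact_Icc.inter_right (isClosed_Iic.preimage cψ)
  obtain ⟨t, ht, htm⟩ := Sc.exists_isGreatest ⟨0, S0⟩
  have So : S.OrdConnected := (vψ.convex_le 0).ordConnected
  refine ⟨t, ht.1.1, ht.1.2, fun s h0 h1 => ⟨fun h => ?_, fun h => ?_⟩⟩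
  · have hs : ψ s ≤ 0 := (So.out S0 ht ⟨h0, h⟩).2
    rw [hH s h1]
    apply Real.rpow_le_rpow (Real.rpow_nonneg (by linarith) _) _ hα1.le
    apply le_max_of_le_right
    simp only [hψ] at hs; linarith
  · have hs : 0 < ψ s := by
      by_contra h2
      exact absurd (htm ⟨⟨h0, h1⟩, not_lt.mp h2⟩) (not_le.mpr h)
    rw [hH s h1]
    apply Real.rpow_le_rpow (le_max_left _ _) _ hα1.le
    apply max_le (Real.rpow_nonneg (by linarith) _)
    simp only [hψ] at hs; linarith

lemma subst_r {α r : ℝ} (hα : 1 < α) (hr0 : 0 < r) (hr1 : r ≤ 1) {c : ℝ → ℝ}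
    (hi : IntervalIntegrable (fun x => x * c x * (max 0 (1 - x^2 * (1/r^2))) ^ (α - 1)) volume 0 1) :
    ∫ ρ in (0:ℝ)..1, ρ * (r^2 * c (r * ρ)) * (1 - ρ^2) ^ (α - 1) =
    ∫ x in (0:ℝ)..1, x * c x * (max 0 (1 - x^2 * (1/r^2))) ^ (α - 1) := by
  set φ : ℝ → ℝ := fun x => x * c x * (max 0 (1 - x^2 * (1/r^2))) ^ (α - 1) with hφ
  have h1 : ∫ ρ in (0:ℝ)..1, ρ * (r^2 * c (r * ρ)) * (1 - ρ^2) ^ (α - 1) =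
      r * ∫ ρ in (0:ℝ)..1, φ (r * ρ) := by
    rw [← intervalIntegral.integral_const_mul]
    apply intervalIntegral.integral_congr
    intro x hx
    simp at hx
    have : 0 ≤ 1 - x^2 := by nlinarith
    simp only [hφ]
    rw [show (r * x)^2 * (1/r^2) = x^2 by field_simp, max_eq_right this]
    ring
  have h2 : ∫ x in r..1, φ x = 0 := by
    apply intervalIntegral.integral_zero_ae
    refine Filter.Eventually.of_forall fun x hx => ?_
    rw [Set.uIoc_of_le hr1] at hx
    have : 1 - x^2 * (1/r^2) ≤ 0 := by
      rw [mul_one_div, sub_nonpos, one_le_div (by positivity)]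
      nlinarith [hx.1]
    simp only [hφ]
    rw [max_eq_left this, Real.zero_rpow (by linarith), mul_zero]
  rw [h1, intervalIntegral.mul_integral_comp_mul_left, mul_zero, mul_one]
  rw [← intervalIntegral.integral_add_adjacent_intervals (a := 0) (b := r) (c := 1) (f := φ), h2, add_zero]
  · exact hi.mono_set (by rw [Set.uIcc_of_le hr0.le, Set.uIcc_of_le zero_le_one]; exact Set.Icc_subset_Icc_right hr1)
  · exact hi.mono_set (by rw [Set.uIcc_of_le hr1, Set.uIcc_of_le zero_le_one]; exact Set.Icc_subset_Icc_left hr0.le)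

lemma conv_order {α β r : ℝ} (hα : 1 < α) (hαβ : α < β) (hr0 : 0 < r) (hr : r^2 = α/β)
    {P c : ℝ → ℝ} (hP : ContinuousOn P (Set.Icc 0 1))
    (hd : ∀ x, 0 < x → x < 1 → HasDerivAt P (x * c x) x) (hc : ∀ x ∈ Set.Icc (0:ℝ) 1, 0 ≤ c x)
    (hm : MonotoneOn c (Set.Icc 0 1)) :
    2 * (α - 1) * (∫ ρ in (0:ℝ)..1, ρ * (1 - ρ^2) ^ (α - 2) * P (r * ρ)) ≤
    2 * (β - 1) * (∫ ρ in (0:ℝ)..1, ρ * (1 - ρ^2) ^ (β - 2) * P ρ) := by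
  have hβ0 : 0 < β := by linarith
  have hr1 : r ≤ 1 := by
    have : r^2 ≤ 1 := by rw [hr, div_le_one hβ0]; exact hαβ.le
    nlinarith
  have hrinv : 1/r^2 = β/α := by rw [hr, one_div_div]
  have hmem : ∀ x ∈ Set.Icc (0:ℝ) 1, r * x ∈ Set.Icc (0:ℝ) 1 := fun x hx =>
    ⟨mul_nonneg hr0.le hx.1, mul_le_one₀ hr1 hx.1 hx.2⟩
  rw [ibp (by linarith) hP hd hc]
  rw [ibp (P := fun ρ => P (r * ρ)) (c := fun ρ => r^2 * c (r * ρ)) hα]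
  rotate_left
  · exact hP.comp (by fun_prop) hmem
  · intro x h0 h1
    have h2 := hd (r * x) (by positivity) (by nlinarith)
    refine (HasDerivAt.comp (h := fun x => r * x) x h2 ((hasDerivAt_id x).const_mul r)).congr_deriv ?_
    ring
  · intro x hx
    exact mul_nonneg (sq_nonneg _) (hc _ (hmem x hx))
  have hi : IntervalIntegrable (fun x => x * c x) volume 0 1 := by
    apply intervalIntegral.intervalIntegrable_deriv_of_nonneg (g := P)
    · simpa using hP
    · intro x hx; simp at hx; exact hd x hx.1 hx.2
    · intro x hx; simp at hx; exact mul_nonneg hx.1.le (hc x ⟨hx.1.le, hx.2.le⟩)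
  set G : ℝ → ℝ := fun x => (max 0 (1 - x^2 * (1/r^2))) ^ (α - 1) with hG
  set H : ℝ → ℝ := fun x => (1 - x^2) ^ (β - 1) with hH
  have cG : Continuous G :=
    (by fun_prop : Continuous fun x : ℝ => max 0 (1 - x^2 * (1/r^2))).rpow_const
      (fun x => Or.inr (by linarith))
  have cH : Continuous H := w_cont (by linarith)
  have iG := hi.mul_continuousOn cG.continuousOn
  have iH := hi.mul_continuousOn cH.continuousOn
  rw [subst_r hα hr0 hr1 iG, mul_zero]
  change P 0 + ∫ x in (0:ℝ)..1, x * c x * G x ≤ P 0 + ∫ x in (0:ℝ)..1, x * c x * H x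
  obtain ⟨t, ht0, ht1, ht⟩ := crossing hα hαβ
  set c0 := c (√t) with hc0
  have i1G : IntervalIntegrable (fun x => x * 1 * G x) volume 0 1 :=
    (by fun_prop : Continuous fun x => x * 1 * G x).intervalIntegrable _ _
  have i1H : IntervalIntegrable (fun x => x * 1 * H x) volume 0 1 :=
    (by fun_prop : Continuous fun x => x * 1 * H x).intervalIntegrable _ _
  have eG : ∫ x in (0:ℝ)..1, x * 1 * G x = 1 / (2 * β) := by
    rw [← subst_r (c := fun _ => 1) hα hr0 hr1 i1G]
    simp only [mul_one]
    rw [show (fun ρ : ℝ => ρ * r^2 * (1 - ρ^2) ^ (α - 1)) = fun ρ => r^2 * (ρ * (1 - ρ^2) ^ (α - 1)) by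
      ext; ring, intervalIntegral.integral_const_mul, w_one (by linarith), hr]
    field_simp
  have eH : ∫ x in (0:ℝ)..1, x * 1 * H x = 1 / (2 * β) := by
    simp only [mul_one]; exact w_one hβ0
  have key : 0 ≤ ∫ x in (0:ℝ)..1, ((x * c x * H x - x * c x * G x) - c0 * (x * 1 * H x - x * 1 * G x)) := by
    apply intervalIntegral.integral_nonneg zero_le_one
    intro x hx
    rw [show (x * c x * H x - x * c x * G x) - c0 * (x * 1 * H x - x * 1 * G x) =
      x * ((c x - c0) * (H x - G x)) by ring]
    refine mul_nonneg hx.1 ?_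
    have h3 := ht (x^2) (sq_nonneg _) (by nlinarith [hx.1, hx.2])
    rw [← hrinv] at h3
    have hst : √t ∈ Set.Icc (0:ℝ) 1 := ⟨Real.sqrt_nonneg _, Real.sqrt_le_one.mpr ht1⟩
    rcases le_or_gt (x^2) t with h | h
    · have h4 := hm hx hst (Real.le_sqrt_of_sq_le h)
      have h5 : H x ≤ G x := h3.1 h
      exact mul_nonneg_of_nonpos_of_nonpos (by linarith) (by linarith)
    · have h4 := hm hst hx ((Real.sqrt_lt_sqrt ht0 h).le.trans (by rw [Real.sqrt_sq hx.1]))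
      have h5 : G x ≤ H x := h3.2 h
      exact mul_nonneg (by linarith) (by linarith)
  rw [intervalIntegral.integral_sub (iH.sub iG) ((i1H.sub i1G).const_mul c0),
    intervalIntegral.integral_sub iH iG, intervalIntegral.integral_const_mul,
    intervalIntegral.integral_sub i1H i1G, eG, eH] at key
  linarith

lemma conv_order' {α β r : ℝ} (hα : 1 < α) (hαβ : α < β) (hr0 : 0 < r) (hr : r^2 = α/β)
    {P c : ℝ → ℝ} (hP : ContinuousOn P (Set.Ico 0 1)) (hP0 : ∀ x ∈ Set.Ico (0:ℝ) 1, 0 ≤ P x)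
    (hd : ∀ x, 0 < x → x < 1 → HasDerivAt P (x * c x) x) (hc : ∀ x ∈ Set.Ico (0:ℝ) 1, 0 ≤ c x)
    (hm : MonotoneOn c (Set.Ico 0 1))
    (hi : IntegrableOn (fun ρ : ℝ => ρ * (1 - ρ^2) ^ (β - 2) * P ρ) (Set.Ioo 0 1)) :
    2 * (α - 1) * (∫ ρ in Set.Ioo (0:ℝ) 1, ρ * (1 - ρ^2) ^ (α - 2) * P (r * ρ)) ≤
    2 * (β - 1) * (∫ ρ in Set.Ioo (0:ℝ) 1, ρ * (1 - ρ^2) ^ (β - 2) * P ρ) := by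
  have hβ0 : 0 < β := by linarith
  have hr1 : r < 1 := by
    have : r^2 < 1 := by rw [hr, div_lt_one hβ0]; exact hαβ
    nlinarith
  have mP : MonotoneOn P (Set.Ico 0 1) := mono_Ico hP hd
    (fun x h0 h1 => mul_nonneg h0.le (hc x ⟨h0.le, h1⟩))
  have wpos : ∀ γ : ℝ, ∀ x ∈ Set.Ioo (0:ℝ) 1, 0 ≤ x * (1 - x^2) ^ (γ - 2) := fun γ x hx =>
    mul_nonneg hx.1.le (Real.rpow_nonneg (by nlinarith [hx.1, hx.2]) _)
  have step : ∀ R : ℝ, 0 < R → R < 1 →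
      2 * (α - 1) * (∫ ρ in Set.Ioo (0:ℝ) 1, ρ * (1 - ρ^2) ^ (α - 2) * P (R * (r * ρ))) ≤
      2 * (β - 1) * (∫ ρ in Set.Ioo (0:ℝ) 1, ρ * (1 - ρ^2) ^ (β - 2) * P ρ) := by
    intro R hR0 hR1
    have hmem : ∀ x ∈ Set.Icc (0:ℝ) 1, R * x ∈ Set.Ico (0:ℝ) 1 := fun x hx =>
      ⟨mul_nonneg hR0.le hx.1, by nlinarith [hx.1, hx.2]⟩
    have h := conv_order hα hαβ hr0 hr (P := fun x => P (R * x)) (c := fun x => R^2 * c (R * x))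
      (hP.comp (by fun_prop) hmem) ?_ (fun x hx => mul_nonneg (sq_nonneg _) (hc _ (hmem x hx))) ?_
    · rw [intervalIntegral.integral_of_le zero_le_one, intervalIntegral.integral_of_le zero_le_one,
        integral_Ioc_eq_integral_Ioo, integral_Ioc_eq_integral_Ioo] at h
      refine h.trans ?_
      refine mul_le_mul_of_nonneg_left ?_ (by linarith)
      apply integral_mono_of_nonneg
      · filter_upwards [ae_restrict_mem measurableSet_Ioo] with x hx
        exact mul_nonneg (wpos β x hx) (hP0 _ (hmem x ⟨hx.1.le, hx.2.le⟩))
      · exact hi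
      · filter_upwards [ae_restrict_mem measurableSet_Ioo] with x hx
        refine mul_le_mul_of_nonneg_left ?_ (wpos β x hx)
        exact mP (hmem x ⟨hx.1.le, hx.2.le⟩) ⟨hx.1.le, hx.2⟩ (by nlinarith [hx.1])
    · intro x h0 h1
      have h2 := hd (R * x) (by positivity) (by nlinarith)
      refine (HasDerivAt.comp (h := fun x => R * x) x h2 ((hasDerivAt_id x).const_mul R)).congr_deriv ?_
      ring
    · intro x hx y hy hxy
      exact mul_le_mul_of_nonneg_left (hm (hmem x hx) (hmem y hy)
        (mul_le_mul_of_nonneg_left hxy hR0.le)) (sq_nonneg _)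
  have lim : Filter.Tendsto (fun R : ℝ => ∫ ρ in Set.Ioo (0:ℝ) 1, ρ * (1 - ρ^2) ^ (α - 2) * P (R * (r * ρ)))
      (nhdsWithin 1 (Set.Iio 1)) (nhds (∫ ρ in Set.Ioo (0:ℝ) 1, ρ * (1 - ρ^2) ^ (α - 2) * P (r * ρ))) := by
    apply tendsto_integral_filter_of_dominated_convergence
      (fun ρ => ρ * (1 - ρ^2) ^ (α - 2) * P r)
    · filter_upwards [Ioo_mem_nhdsLT (zero_lt_one (α := ℝ))] with R hR
      apply AEStronglyMeasurable.mul (w_int' hα).aestronglyMeasurable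
      apply ContinuousOn.aestronglyMeasurable _ measurableSet_Ioo
      refine hP.comp (by fun_prop) fun x hx => ?_
      have := mul_pos hr0 hx.1
      have : r * x < 1 := by nlinarith [hx.1, hx.2]
      exact ⟨mul_nonneg hR.1.le (by linarith), by nlinarith [hR.1, hR.2]⟩
    · filter_upwards [Ioo_mem_nhdsLT (zero_lt_one (α := ℝ))] with R hR
      filter_upwards [ae_restrict_mem measurableSet_Ioo] with x hx
      have h1 := mul_pos hr0 hx.1
      have h2 : r * x < r := by nlinarith [hx.1, hx.2]
      have h3 : R * (r * x) ≤ r := by nlinarith [hR.1, hR.2]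
      have h4 : R * (r * x) ∈ Set.Ico (0:ℝ) 1 := ⟨mul_nonneg hR.1.le h1.le, by linarith⟩
      rw [Real.norm_of_nonneg (mul_nonneg (wpos α x hx) (hP0 _ h4))]
      exact mul_le_mul_of_nonneg_left (mP h4 ⟨hr0.le, hr1⟩ h3) (wpos α x hx)
    · exact (w_int' hα).mul_const _
    · filter_upwards [ae_restrict_mem measurableSet_Ioo] with x hx
      have h1 := mul_pos hr0 hx.1
      have h2 : r * x < 1 := by nlinarith [hx.1, hx.2]
      apply Filter.Tendsto.const_mul
      have h3 : ContinuousAt P (1 * (r * x)) := by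
        rw [one_mul]; exact (hd _ h1 h2).continuousAt
      have h4 : ContinuousAt (fun R : ℝ => P (R * (r * x))) 1 :=
        ContinuousAt.comp (f := fun R : ℝ => R * (r * x)) h3 (by fun_prop)
      have h5 := h4.tendsto
      rw [one_mul] at h5
      exact h5.mono_left nhdsWithin_le_nhds
  refine le_of_tendsto (lim.const_mul (2 * (α - 1))) ?_
  filter_upwards [Ioo_mem_nhdsLT (zero_lt_one (α := ℝ))] with R hR
  exact step R hR.1 hR.2

lemma wt_cont (γ : ℝ) : ContinuousOn (fun ρ : ℝ => (1 - ρ^2) ^ (γ - 2)) (Set.Ico 0 1) := by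
  refine ContinuousOn.rpow_const (by fun_prop) (fun x hx => Or.inl ?_)
  nlinarith [hx.1, hx.2]

lemma wt_pos (γ : ℝ) {z : ℂ} (hz : z ∈ ball (0:ℂ) 1) : 0 < (1 - ‖z‖^2) ^ (γ - 2) := by
  have h : ‖z‖ < 1 := by simpa using hz
  refine Real.rpow_pos_of_pos ?_ _
  nlinarith [norm_nonneg z]

lemma wt_contB (γ : ℝ) : ContinuousOn (fun z : ℂ => (1 - ‖z‖^2) ^ (γ - 2)) (ball 0 1) := by
  refine (wt_cont γ).comp continuous_norm.continuousOn (fun z hz => ?_)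
  exact ⟨norm_nonneg z, by simpa using hz⟩

lemma wt_int {γ : ℝ} (hγ : 1 < γ) :
    IntegrableOn (fun z : ℂ => (1 - ‖z‖^2) ^ (γ - 2)) (ball (0:ℂ) 1) := by
  have := (integrableOn_fun_norm_addHaar (E := ℂ) volume
    (f := fun y : ℝ => (1 - y^2) ^ (γ - 2)) (r := 1))
  refine this.2 ?_
  rw [Complex.finrank_real_complex]
  simpa using w_int' hγ

lemma ue_bound {x p ε : ℝ} (hx : 0 ≤ x) (hp : 1 ≤ p) (hε : 0 < ε) (hε1 : ε ≤ 1) :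
    (x^2 + ε)^p ≤ 2^p * (x^(2*p) + 1) := by
  have hxp : (x^2)^p = x^(2*p) := by
    rw [← Real.rpow_natCast, ← Real.rpow_mul hx]; norm_num
  have hp0 : 0 ≤ p := by linarith
  have h2 : 0 ≤ x^(2*p) := Real.rpow_nonneg hx _
  have h3 : (0:ℝ) ≤ 2^p := by positivity
  rcases le_total (x^2) 1 with h | h
  · calc (x^2+ε)^p ≤ 2^p := Real.rpow_le_rpow (by positivity) (by linarith) hp0
      _ ≤ _ := by nlinarith
  · calc (x^2+ε)^p ≤ (2 * x^2)^p := Real.rpow_le_rpow (by positivity) (by linarith) hp0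
      _ = 2^p * x^(2*p) := by rw [Real.mul_rpow (by norm_num) (by positivity), hxp]
      _ ≤ _ := by nlinarith

lemma bd_int {q β : ℝ} (hβ : 1 < β) {f : ℂ → ℂ}
    (hfq : IntegrableOn (fun z => ‖f z‖ ^ q * ((β - 1) / Real.pi * (1 - ‖z‖ ^ 2) ^ (β - 2)))
      (ball (0 : ℂ) 1)) (C : ℝ) :
    IntegrableOn (fun z => C * (‖f z‖ ^ q + 1) * (1 - ‖z‖ ^ 2) ^ (β - 2)) (ball (0 : ℂ) 1) := by
  have h1 := hfq.const_mul (C * ((β - 1) / Real.pi)⁻¹)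
  have h2 := (wt_int hβ).const_mul C
  refine (h1.add h2).congr (Filter.Eventually.of_forall fun z => ?_)
  have : β - 1 ≠ 0 := by linarith
  have := Real.pi_ne_zero
  simp only [Pi.add_apply]
  field_simp

lemma fixed_eps {p α β r ε : ℝ} (hp : 1 ≤ p) (hα : 1 < α) (hαβ : α < β) (hr0 : 0 < r)
    (hr : r^2 = α / β) (hε : 0 < ε)
    {f : ℂ → ℂ} (hf : DifferentiableOn ℂ f (ball (0 : ℂ) 1))
    (hi : IntegrableOn (fun z => (‖f z‖^2 + ε)^p * (1 - ‖z‖^2)^(β - 2)) (ball (0:ℂ) 1)) :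
    IntegrableOn (fun z => (‖f ((r:ℂ) * z)‖^2 + ε)^p * (1 - ‖z‖^2)^(α - 2)) (ball (0:ℂ) 1) ∧
    (α - 1) / Real.pi * ∫ z in ball (0:ℂ) 1, (‖f ((r:ℂ) * z)‖^2 + ε)^p * (1 - ‖z‖^2)^(α - 2) ≤
    (β - 1) / Real.pi * ∫ z in ball (0:ℂ) 1, (‖f z‖^2 + ε)^p * (1 - ‖z‖^2)^(β - 2) := by
  obtain ⟨hu, c, hA, hd, hm, hc⟩ := struct hf hp hε
  have hβ0 : 0 < β := by linarith
  have hr1 : r < 1 := by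
    have : α / β < 1 := (div_lt_one hβ0).2 hαβ
    nlinarith
  set u : ℂ → ℝ := fun z => (‖f z‖^2 + ε)^p with hudef
  have hu0 : ∀ z, 0 ≤ u z := fun z => by simp only [hudef]; positivity
  have hmaps : Set.MapsTo (fun z : ℂ => (r:ℂ) * z) (ball 0 1) (closedBall 0 r) := by
    intro z hz
    have h : ‖z‖ < 1 := by simpa using hz
    simp only [mem_closedBall, dist_zero_right, norm_mul, Complex.norm_real, Real.norm_eq_abs,
      abs_of_pos hr0]
    nlinarith
  have hcb : closedBall (0:ℂ) r ⊆ ball 0 1 := closedBall_subset_ball hr1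
  have hur : ContinuousOn (fun z : ℂ => u ((r:ℂ) * z)) (ball 0 1) :=
    hu.comp (by fun_prop) (fun z hz => hcb (hmaps hz))
  obtain ⟨M, hM⟩ := (isCompact_closedBall (0:ℂ) r).exists_bound_of_continuousOn (hu.mono hcb)
  have hir : IntegrableOn (fun z => u ((r:ℂ) * z) * (1 - ‖z‖^2)^(α - 2)) (ball (0:ℂ) 1) := by
    refine Integrable.mono' ((wt_int hα).const_mul M)
      ((hur.mul (wt_contB α)).aestronglyMeasurable measurableSet_ball) ?_
    refine (ae_restrict_iff' measurableSet_ball).2 (Filter.Eventually.of_forall fun z hz => ?_)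
    rw [norm_mul, Real.norm_eq_abs ((1 - ‖z‖^2)^(α - 2)), abs_of_pos (wt_pos α hz)]
    exact mul_le_mul_of_nonneg_right (hM _ (hmaps hz)) (wt_pos α hz).le
  refine ⟨hir, ?_⟩
  have e1 := (polar_red (w := fun ρ => (1 - ρ^2)^(α - 2)) hur (wt_cont α) hir).2
  have e2 := polar_red (w := fun ρ => (1 - ρ^2)^(β - 2)) hu (wt_cont β) hi
  have hAr : ∀ ρ : ℝ, Am (fun z : ℂ => u ((r:ℂ) * z)) ρ = Am u (r * ρ) := by
    intro ρ
    unfold Am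
    simp only [Complex.ofReal_mul, mul_assoc]
  have key := conv_order' hα hαβ hr0 hr hA (fun x hx => Am_nonneg (fun z _ => hu0 z) hx.1 hx.2)
    hd hc hm e2.1
  simp only [hAr] at e1
  rw [e1, e2.2]
  have hpi := Real.pi_pos
  rw [div_mul_eq_mul_div, div_mul_eq_mul_div]
  refine div_le_div_of_nonneg_right ?_ hpi.le
  linarith

theorem weighted_dilation_inequality_q_ge_two
    (q α β : ℝ) (hq : 2 ≤ q) (hα : 1 < α) (hαβ : α < β)
    (f : ℂ → ℂ) (hf : DifferentiableOn ℂ f (ball (0 : ℂ) 1))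
    (hfq : IntegrableOn
      (fun z => ‖f z‖ ^ q * ((β - 1) / Real.pi * (1 - ‖z‖ ^ 2) ^ (β - 2)))
      (ball (0 : ℂ) 1)) :
    (α - 1) / Real.pi *
        ∫ z in ball (0 : ℂ) 1,
          ‖f ((Real.sqrt (α / β) : ℂ) * z)‖ ^ q * (1 - ‖z‖ ^ 2) ^ (α - 2) ≤
      (β - 1) / Real.pi *
        ∫ z in ball (0 : ℂ) 1, ‖f z‖ ^ q * (1 - ‖z‖ ^ 2) ^ (β - 2) := by
  have hβ0 : 0 < β := by linarith
  have hβ1 : 1 < β := by linarith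
  have hab : 0 < α / β := by positivity
  have hr0 : 0 < Real.sqrt (α / β) := Real.sqrt_pos.2 hab
  have hr : Real.sqrt (α / β) ^ 2 = α / β := Real.sq_sqrt hab.le
  set r := Real.sqrt (α / β)
  set p := q / 2 with hpdef
  have hp : 1 ≤ p := by rw [hpdef]; linarith
  have hpq : 2 * p = q := by rw [hpdef]; ring
  have hxp : ∀ x : ℝ, 0 ≤ x → (x^2)^p = x^q := by
    intro x hx
    rw [← Real.rpow_natCast, ← Real.rpow_mul hx, ← hpq]; norm_num
  have hfc : ContinuousOn f (ball 0 1) := hf.continuousOn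
  have hbd := bd_int hβ1 hfq (2^p)
  have hmeas : ∀ ε : ℝ, 0 < ε → AEStronglyMeasurable
      (fun z => (‖f z‖^2 + ε)^p * (1 - ‖z‖^2)^(β - 2)) (volume.restrict (ball (0:ℂ) 1)) := by
    intro ε hε
    exact ((struct hf hp hε).1.mul (wt_contB β)).aestronglyMeasurable measurableSet_ball
  have hdom : ∀ ε : ℝ, 0 < ε → ε ≤ 1 → ∀ᵐ z ∂(volume.restrict (ball (0:ℂ) 1)),
      ‖(‖f z‖^2 + ε)^p * (1 - ‖z‖^2)^(β - 2)‖ ≤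
        2^p * (‖f z‖ ^ q + 1) * (1 - ‖z‖ ^ 2) ^ (β - 2) := by
    intro ε hε hε1
    refine (ae_restrict_iff' measurableSet_ball).2 (Filter.Eventually.of_forall fun z hz => ?_)
    have h1 : 0 ≤ (‖f z‖^2 + ε)^p := by positivity
    rw [Real.norm_eq_abs, abs_of_nonneg (mul_nonneg h1 (wt_pos β hz).le)]
    refine mul_le_mul_of_nonneg_right ?_ (wt_pos β hz).le
    rw [← hpq]
    exact ue_bound (norm_nonneg _) hp hε hε1
  have hstep : ∀ ε : ℝ, 0 < ε → ε ≤ 1 →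
      (α - 1) / Real.pi * ∫ z in ball (0 : ℂ) 1,
          ‖f ((r : ℂ) * z)‖ ^ q * (1 - ‖z‖ ^ 2) ^ (α - 2) ≤
      (β - 1) / Real.pi * ∫ z in ball (0:ℂ) 1, (‖f z‖^2 + ε)^p * (1 - ‖z‖^2)^(β - 2) := by
    intro ε hε hε1
    obtain ⟨hir, hle⟩ := fixed_eps hp hα hαβ hr0 hr hε hf
      (Integrable.mono' hbd (hmeas ε hε) (hdom ε hε hε1))
    refine le_trans (mul_le_mul_of_nonneg_left ?_ ?_) hle
    · refine integral_mono_of_nonneg ?_ hir ?_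
      · refine (ae_restrict_iff' measurableSet_ball).2 (Filter.Eventually.of_forall fun z hz => ?_)
        exact mul_nonneg (Real.rpow_nonneg (norm_nonneg _) _) (wt_pos α hz).le
      · refine (ae_restrict_iff' measurableSet_ball).2 (Filter.Eventually.of_forall fun z hz => ?_)
        refine mul_le_mul_of_nonneg_right ?_ (wt_pos α hz).le
        rw [← hxp _ (norm_nonneg _)]
        exact Real.rpow_le_rpow (by positivity) (by linarith) (by linarith)
    · have := Real.pi_pos
      exact div_nonneg (by linarith) this.le
  have hev : ∀ᶠ ε : ℝ in nhdsWithin 0 (Set.Ioi 0), 0 < ε ∧ ε ≤ 1 := by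
    filter_upwards [Ioc_mem_nhdsGT (zero_lt_one : (0:ℝ) < 1)] with ε hε
    exact hε
  have hlim : Filter.Tendsto
      (fun ε : ℝ => ∫ z in ball (0:ℂ) 1, (‖f z‖^2 + ε)^p * (1 - ‖z‖^2)^(β - 2))
      (nhdsWithin 0 (Set.Ioi 0))
      (nhds (∫ z in ball (0 : ℂ) 1, ‖f z‖ ^ q * (1 - ‖z‖ ^ 2) ^ (β - 2))) := by
    refine tendsto_integral_filter_of_dominated_convergence _
      (hev.mono fun ε h => hmeas ε h.1) (hev.mono fun ε h => hdom ε h.1 h.2) hbd ?_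
    refine Filter.Eventually.of_forall fun z => ?_
    have hc : Continuous (fun ε : ℝ => (‖f z‖^2 + ε)^p * (1 - ‖z‖^2)^(β - 2)) :=
      (Continuous.rpow_const (by fun_prop) (fun x => Or.inr (by linarith))).mul continuous_const
    have := (hc.tendsto 0).mono_left (nhdsWithin_le_nhds (s := Set.Ioi 0))
    simpa [hxp _ (norm_nonneg _)] using this
  exact ge_of_tendsto (hlim.const_mul _) (hev.mono fun ε h => hstep ε h.1 h.2)
end

section
/- Let q > 0, let 1 < α < β, and set r = √((α−1)/(β−1)). For every holomorphic f on the unit disk 𝔻 with ∫_𝔻 |f(z)|^q dA_β(z) < ∞, one has ((α−1)/π) ∫_𝔻 |f(rz)|^q (1−|z|²)^{α−2} dA(z) ≤ ((β−1)/π) ∫_𝔻 |f(z)|^q (1−|z|²)^{β−2} dA(z). -/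
open MeasureTheory Metric

lemma wd_param (F F' : ℝ → ℝ → ℝ) (a b : ℝ) (U : Set ℝ) (hU : IsOpen U)
    (hF : ContinuousOn (fun x : ℝ × ℝ => F x.1 x.2) (U ×ˢ Set.univ))
    (hF' : ContinuousOn (fun x : ℝ × ℝ => F' x.1 x.2) (U ×ˢ Set.univ))
    (hd : ∀ s ∈ U, ∀ θ, HasDerivAt (fun s => F s θ) (F' s θ) s) (s : ℝ) (hs : s ∈ U) :
    HasDerivAt (fun s => ∫ θ in a..b, F s θ) (∫ θ in a..b, F' s θ) s := by
  obtain ⟨δ, hδ, hball⟩ := Metric.nhds_basis_closedBall.mem_iff.1 (hU.mem_nhds hs)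
  have hsec : ∀ G : ℝ → ℝ → ℝ, ContinuousOn (fun x : ℝ × ℝ => G x.1 x.2) (U ×ˢ Set.univ) →
      ∀ x ∈ U, Continuous (G x) := by
    intro G hG x hx
    rw [← continuousOn_univ]
    exact hG.comp (f := fun θ : ℝ => (x, θ)) (by fun_prop) (fun θ _ => ⟨hx, trivial⟩)
  have hK : IsCompact (closedBall s δ ×ˢ Set.uIcc a b) :=
    (isCompact_closedBall s δ).prod isCompact_uIcc
  obtain ⟨C, hC⟩ := hK.exists_bound_of_continuousOn
    (hF'.mono (Set.prod_mono hball (Set.subset_univ _)))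
  refine (intervalIntegral.hasDerivAt_integral_of_dominated_loc_of_deriv_le
    (s := closedBall s δ) (bound := fun _ => C)
    (closedBall_mem_nhds s hδ) ?_ ?_ ?_ ?_ ?_ ?_).2
  · filter_upwards [hU.mem_nhds hs] with x hx
    exact (hsec F hF x hx).aestronglyMeasurable
  · exact (hsec F hF s hs).intervalIntegrable _ _
  · exact (hsec F' hF' s hs).aestronglyMeasurable
  · refine Filter.Eventually.of_forall fun θ hθ x hx => ?_
    exact hC (x, θ) ⟨hx, Set.uIoc_subset_uIcc hθ⟩
  · exact intervalIntegrable_const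
  · exact Filter.Eventually.of_forall fun θ _ x hx => hd x (hball hx) θ

/-- derivative of `v^p`, `v = |A|^2+ε`. -/
lemma wd_deriv1 (p ε : ℝ) (hε : 0 < ε) (A : ℝ → ℂ) (a : ℂ) (x : ℝ)
    (hA : HasDerivAt A a x) :
    HasDerivAt (fun x => ((A x).re ^ 2 + (A x).im ^ 2 + ε) ^ p)
      (2 * p * ((A x).re ^ 2 + (A x).im ^ 2 + ε) ^ (p - 1) *
        ((A x).re * a.re + (A x).im * a.im)) x := by
  have h1 : HasDerivAt (fun x => (A x).re) a.re x :=
    Complex.reCLM.hasFDerivAt.comp_hasDerivAt x hA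
  have h2 : HasDerivAt (fun x => (A x).im) a.im x :=
    Complex.imCLM.hasFDerivAt.comp_hasDerivAt x hA
  have h3 := (((h1.pow 2).add (h2.pow 2)).add_const ε).rpow_const (p := p)
    (Or.inl (by simp only [Pi.add_apply, Pi.pow_apply]; positivity))
  convert! h3 using 1
  simp
  ring

/-- derivative of `2 p v^(p-1) Re (conj A * B)` -/
lemma wd_deriv2 (p ε : ℝ) (hε : 0 < ε) (A B : ℝ → ℂ) (a b : ℂ) (x : ℝ)
    (hA : HasDerivAt A a x) (hB : HasDerivAt B b x) :
    HasDerivAt (fun x => 2 * p * ((A x).re ^ 2 + (A x).im ^ 2 + ε) ^ (p - 1) *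
        ((A x).re * (B x).re + (A x).im * (B x).im))
      (2 * p * (2 * (p - 1) * ((A x).re ^ 2 + (A x).im ^ 2 + ε) ^ (p - 2) *
        ((A x).re * a.re + (A x).im * a.im) * ((A x).re * (B x).re + (A x).im * (B x).im) +
        ((A x).re ^ 2 + (A x).im ^ 2 + ε) ^ (p - 1) *
        (a.re * (B x).re + (A x).re * b.re + a.im * (B x).im + (A x).im * b.im))) x := by
  have h1 : HasDerivAt (fun x => (A x).re) a.re x :=
    Complex.reCLM.hasFDerivAt.comp_hasDerivAt x hA
  have h2 : HasDerivAt (fun x => (A x).im) a.im x :=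
    Complex.imCLM.hasFDerivAt.comp_hasDerivAt x hA
  have h3 : HasDerivAt (fun x => (B x).re) b.re x :=
    Complex.reCLM.hasFDerivAt.comp_hasDerivAt x hB
  have h4 : HasDerivAt (fun x => (B x).im) b.im x :=
    Complex.imCLM.hasFDerivAt.comp_hasDerivAt x hB
  have h5 := wd_deriv1 (p - 1) ε hε A a x hA
  convert! (h5.const_mul (2 * p)).mul ((h1.mul h3).add (h2.mul h4)) using 1
  rw [show p - 1 - 1 = p - 2 by ring]
  simp
  ring

/-- the subharmonicity identity; `Q` is handled as `P` with `B` replaced by `-I * B`. -/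
lemma wd_alg (p ε s : ℝ) (hp : 0 < p) (hε : 0 < ε) (A B C a b : ℂ)
    (ha : (s : ℂ) * a = B) (hb : (s : ℂ) * b = C) :
    2 * p * (2 * (p - 1) * (A.re ^ 2 + A.im ^ 2 + ε) ^ (p - 2) *
        (A.re * (Complex.I * B).re + A.im * (Complex.I * B).im) *
        (A.re * (-Complex.I * B).re + A.im * (-Complex.I * B).im) +
        (A.re ^ 2 + A.im ^ 2 + ε) ^ (p - 1) *
        ((Complex.I * B).re * (-Complex.I * B).re + A.re * C.re +
          (Complex.I * B).im * (-Complex.I * B).im + A.im * C.im)) ≤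
    s * (2 * p * (2 * (p - 1) * (A.re ^ 2 + A.im ^ 2 + ε) ^ (p - 2) *
        (A.re * a.re + A.im * a.im) * (A.re * B.re + A.im * B.im) +
        (A.re ^ 2 + A.im ^ 2 + ε) ^ (p - 1) *
        (a.re * B.re + A.re * b.re + a.im * B.im + A.im * b.im))) := by
  have a1 : B.re = s * a.re := by rw [← ha]; simp
  have a2 : B.im = s * a.im := by rw [← ha]; simp
  have b1 : C.re = s * b.re := by rw [← hb]; simp
  have b2 : C.im = s * b.im := by rw [← hb]; simp
  have hv : 0 < A.re ^ 2 + A.im ^ 2 + ε := by positivity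
  have hpow : (A.re ^ 2 + A.im ^ 2 + ε) ^ (p - 1) =
      (A.re ^ 2 + A.im ^ 2 + ε) ^ (p - 2) * (A.re ^ 2 + A.im ^ 2 + ε) := by
    rw [← Real.rpow_add_one hv.ne']; congr 1; ring
  rw [hpow]
  have hW : 0 < (A.re ^ 2 + A.im ^ 2 + ε) ^ (p - 2) := Real.rpow_pos_of_pos hv _
  generalize (A.re ^ 2 + A.im ^ 2 + ε) ^ (p - 2) = W at *
  rw [← sub_nonneg]
  have : 0 ≤ 4 * p * W * (B.re ^ 2 + B.im ^ 2) * (p * (A.re ^ 2 + A.im ^ 2) + ε) := by positivity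
  refine this.trans_eq ?_
  simp [a1, a2, b1, b2]
  ring

lemma wd_mono_eps (p ε : ℝ) (hp : 0 < p) (hε : 0 < ε)
    (f : ℂ → ℂ) (hf : DifferentiableOn ℂ f (ball (0 : ℂ) 1)) :
    MonotoneOn (fun s : ℝ => ∫ θ in (-Real.pi)..Real.pi,
      ((f (s * Complex.exp (θ * Complex.I))).re ^ 2 +
        (f (s * Complex.exp (θ * Complex.I))).im ^ 2 + ε) ^ p) (Set.Ico 0 1) := by
  set E : ℝ → ℂ := fun θ => Complex.exp (θ * Complex.I) with hE
  have hEn : ∀ θ, ‖E θ‖ = 1 := fun θ => Complex.norm_exp_ofReal_mul_I θ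
  have hEc : Continuous E := by fun_prop
  have hEd : ∀ θ, HasDerivAt E (Complex.I * E θ) θ := by
    intro θ
    have h1 : HasDerivAt (fun θ : ℝ => (θ : ℂ) * Complex.I) Complex.I θ := by
      simpa using (Complex.ofRealCLM.hasDerivAt (x := θ)).mul_const Complex.I
    have := h1.cexp
    rwa [mul_comm] at this
  set U : Set ℝ := Set.Ioo (-1) 1 with hU
  have hUo : IsOpen U := isOpen_Ioo
  have hz : ∀ s ∈ U, ∀ θ, (s : ℂ) * E θ ∈ ball (0 : ℂ) 1 := by
    intro s hs θ
    rw [mem_ball_zero_iff, norm_mul, hEn, mul_one, Complex.norm_real, Real.norm_eq_abs]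
    exact abs_lt.2 hs
  have hf1 : DifferentiableOn ℂ (deriv f) (ball (0 : ℂ) 1) := hf.deriv isOpen_ball
  have hf2 : DifferentiableOn ℂ (deriv (deriv f)) (ball (0 : ℂ) 1) := hf1.deriv isOpen_ball
  have D0 : ∀ z ∈ ball (0 : ℂ) 1, HasDerivAt f (deriv f z) z := fun z hz =>
    (hf.differentiableAt (isOpen_ball.mem_nhds hz)).hasDerivAt
  have D1 : ∀ z ∈ ball (0 : ℂ) 1, HasDerivAt (deriv f) (deriv (deriv f) z) z := fun z hz =>
    (hf1.differentiableAt (isOpen_ball.mem_nhds hz)).hasDerivAt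
  set S : Set (ℝ × ℝ) := U ×ˢ Set.univ with hS
  have hzc : Continuous (fun x : ℝ × ℝ => (x.1 : ℂ) * E x.2) := by fun_prop
  have cz : ∀ g : ℂ → ℂ, DifferentiableOn ℂ g (ball (0 : ℂ) 1) →
      ContinuousOn (fun x : ℝ × ℝ => g ((x.1 : ℂ) * E x.2)) S := fun g hg =>
    hg.continuousOn.comp hzc.continuousOn (fun x hx => hz x.1 hx.1 x.2)
  have c0 := cz f hf
  have c1 := cz _ hf1
  have c2 := cz _ hf2
  have cre : ∀ g : ℝ × ℝ → ℂ, ContinuousOn g S → ContinuousOn (fun x => (g x).re) S :=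
    fun g hg => Complex.continuous_re.comp_continuousOn hg
  have cim : ∀ g : ℝ × ℝ → ℂ, ContinuousOn g S → ContinuousOn (fun x => (g x).im) S :=
    fun g hg => Complex.continuous_im.comp_continuousOn hg
  have cv : ∀ r : ℝ, ContinuousOn (fun x : ℝ × ℝ => ((f ((x.1 : ℂ) * E x.2)).re ^ 2 +
        (f ((x.1 : ℂ) * E x.2)).im ^ 2 + ε) ^ r) S := by
    intro r
    refine ContinuousOn.rpow_const ((((cre _ c0).pow 2).add ((cim _ c0).pow 2)).add
      continuousOn_const) (fun x _ => Or.inl ?_)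
    positivity
  -- the functions
  set A : ℝ → ℝ → ℂ := fun s θ => f ((s : ℂ) * E θ) with hA
  set B : ℝ → ℝ → ℂ := fun s θ => ((s : ℂ) * E θ) * deriv f ((s : ℂ) * E θ) with hB
  set a : ℝ → ℝ → ℂ := fun s θ => E θ * deriv f ((s : ℂ) * E θ) with ha
  set b : ℝ → ℝ → ℂ := fun s θ => E θ * deriv f ((s : ℂ) * E θ) +
    ((s : ℂ) * E θ) * (E θ * deriv (deriv f) ((s : ℂ) * E θ)) with hb
  have cA : ContinuousOn (fun x : ℝ × ℝ => A x.1 x.2) S := c0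
  have cE : ContinuousOn (fun x : ℝ × ℝ => E x.2) S := by fun_prop
  have cB : ContinuousOn (fun x : ℝ × ℝ => B x.1 x.2) S := hzc.continuousOn.mul c1
  have ca : ContinuousOn (fun x : ℝ × ℝ => a x.1 x.2) S := cE.mul c1
  have cb : ContinuousOn (fun x : ℝ × ℝ => b x.1 x.2) S :=
    (cE.mul c1).add (hzc.continuousOn.mul (cE.mul c2))
  have hsz : ∀ s θ : ℝ, HasDerivAt (fun s : ℝ => (s : ℂ) * E θ) (E θ) s := by
    intro s θ
    simpa using (Complex.ofRealCLM.hasDerivAt (x := s)).mul_const (E θ)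
  have hθz : ∀ s θ : ℝ, HasDerivAt (fun θ : ℝ => (s : ℂ) * E θ) (Complex.I * (s * E θ)) θ := by
    intro s θ
    have := (hEd θ).const_mul (s : ℂ)
    convert! this using 1
    ring
  have dA : ∀ s ∈ U, ∀ θ, HasDerivAt (fun s => A s θ) (a s θ) s := by
    intro s hs θ
    have := (D0 _ (hz s hs θ)).comp s (hsz s θ)
    convert! this using 1
    simp [ha]; ring
  have dB : ∀ s ∈ U, ∀ θ, HasDerivAt (fun s => B s θ) (b s θ) s := by
    intro s hs θ
    have := (hsz s θ).mul ((D1 _ (hz s hs θ)).comp s (hsz s θ))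
    convert! this using 1
    simp only [hb, Function.comp]; ring
  have dAθ : ∀ s ∈ U, ∀ θ, HasDerivAt (fun θ => A s θ) (Complex.I * B s θ) θ := by
    intro s hs θ
    have := (D0 _ (hz s hs θ)).comp θ (hθz s θ)
    convert! this using 1
    simp [hB]; ring
  have dBθ : ∀ s ∈ U, ∀ θ, HasDerivAt (fun θ => -Complex.I * B s θ) (s * b s θ) θ := by
    intro s hs θ
    have := ((hθz s θ).mul ((D1 _ (hz s hs θ)).comp θ (hθz s θ))).const_mul (-Complex.I)
    convert! this using 1
    simp only [hb, Function.comp]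
    linear_combination ((s : ℂ) * E θ * deriv f (s * E θ)
      + (s * E θ)^2 * deriv (deriv f) (s * E θ)) * Complex.I_sq
  have hsa : ∀ s θ : ℝ, (s : ℂ) * a s θ = B s θ := by
    intro s θ; simp only [ha, hB]; ring
  have cPa : ContinuousOn (fun x : ℝ × ℝ =>
      2 * p * ((A x.1 x.2).re ^ 2 + (A x.1 x.2).im ^ 2 + ε) ^ (p - 1) *
        ((A x.1 x.2).re * (a x.1 x.2).re + (A x.1 x.2).im * (a x.1 x.2).im)) S :=
    ((continuousOn_const.mul (cv (p - 1))).mul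
      (((cre _ cA).mul (cre _ ca)).add ((cim _ cA).mul (cim _ ca))))
  have cPB : ContinuousOn (fun x : ℝ × ℝ =>
      2 * p * ((A x.1 x.2).re ^ 2 + (A x.1 x.2).im ^ 2 + ε) ^ (p - 1) *
        ((A x.1 x.2).re * (B x.1 x.2).re + (A x.1 x.2).im * (B x.1 x.2).im)) S :=
    ((continuousOn_const.mul (cv (p - 1))).mul
      (((cre _ cA).mul (cre _ cB)).add ((cim _ cA).mul (cim _ cB))))
  -- first derivative
  have N1 := wd_param (fun s θ => ((A s θ).re ^ 2 + (A s θ).im ^ 2 + ε) ^ p)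
    (fun s θ => 2 * p * ((A s θ).re ^ 2 + (A s θ).im ^ 2 + ε) ^ (p - 1) *
        ((A s θ).re * (a s θ).re + (A s θ).im * (a s θ).im)) (-Real.pi) Real.pi U hUo (cv p)
    cPa
    (fun s hs θ => wd_deriv1 p ε hε (fun s => A s θ) (a s θ) s (dA s hs θ))
  have cP' : ContinuousOn (fun x : ℝ × ℝ => 2 * p * (2 * (p - 1) *
        ((A x.1 x.2).re ^ 2 + (A x.1 x.2).im ^ 2 + ε) ^ (p - 2) *
        ((A x.1 x.2).re * (a x.1 x.2).re + (A x.1 x.2).im * (a x.1 x.2).im) *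
        ((A x.1 x.2).re * (B x.1 x.2).re + (A x.1 x.2).im * (B x.1 x.2).im) +
        ((A x.1 x.2).re ^ 2 + (A x.1 x.2).im ^ 2 + ε) ^ (p - 1) *
        ((a x.1 x.2).re * (B x.1 x.2).re + (A x.1 x.2).re * (b x.1 x.2).re +
          (a x.1 x.2).im * (B x.1 x.2).im + (A x.1 x.2).im * (b x.1 x.2).im))) S := by
    refine continuousOn_const.mul ((((continuousOn_const.mul (cv (p - 2))).mul
      (((cre _ cA).mul (cre _ ca)).add ((cim _ cA).mul (cim _ ca)))).mul
      (((cre _ cA).mul (cre _ cB)).add ((cim _ cA).mul (cim _ cB)))).add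
      ((cv (p - 1)).mul ((((cre _ ca).mul (cre _ cB)).add ((cre _ cA).mul (cre _ cb))).add
        ((cim _ ca).mul (cim _ cB)) |>.add ((cim _ cA).mul (cim _ cb)))))
  have N2 := wd_param (fun s θ => 2 * p * ((A s θ).re ^ 2 + (A s θ).im ^ 2 + ε) ^ (p - 1) *
        ((A s θ).re * (B s θ).re + (A s θ).im * (B s θ).im))
    (fun s θ => 2 * p * (2 * (p - 1) * ((A s θ).re ^ 2 + (A s θ).im ^ 2 + ε) ^ (p - 2) *
        ((A s θ).re * (a s θ).re + (A s θ).im * (a s θ).im) *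
        ((A s θ).re * (B s θ).re + (A s θ).im * (B s θ).im) +
        ((A s θ).re ^ 2 + (A s θ).im ^ 2 + ε) ^ (p - 1) *
        ((a s θ).re * (B s θ).re + (A s θ).re * (b s θ).re +
          (a s θ).im * (B s θ).im + (A s θ).im * (b s θ).im)))
    (-Real.pi) Real.pi U hUo
    cPB cP'
    (fun s hs θ => wd_deriv2 p ε hε (fun s => A s θ) (fun s => B s θ) (a s θ) (b s θ) s
      (dA s hs θ) (dB s hs θ))
  have hsec : ∀ G : ℝ × ℝ → ℝ, ContinuousOn G S → ∀ s ∈ U, Continuous (fun θ => G (s, θ)) := by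
    intro G hG x hx
    rw [← continuousOn_univ]
    exact hG.comp (f := fun θ : ℝ => (x, θ)) (by fun_prop) (fun θ _ => ⟨hx, trivial⟩)
  have cIB : ContinuousOn (fun x : ℝ × ℝ => Complex.I * B x.1 x.2) S := continuousOn_const.mul cB
  have cnIB : ContinuousOn (fun x : ℝ × ℝ => -Complex.I * B x.1 x.2) S := continuousOn_const.mul cB
  have csb : ContinuousOn (fun x : ℝ × ℝ => (x.1 : ℂ) * b x.1 x.2) S :=
    ContinuousOn.mul (by fun_prop) cb
  have cQ' : ContinuousOn (fun x : ℝ × ℝ => 2 * p * (2 * (p - 1) *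
        ((A x.1 x.2).re ^ 2 + (A x.1 x.2).im ^ 2 + ε) ^ (p - 2) *
        ((A x.1 x.2).re * (Complex.I * B x.1 x.2).re + (A x.1 x.2).im * (Complex.I * B x.1 x.2).im) *
        ((A x.1 x.2).re * (-Complex.I * B x.1 x.2).re +
          (A x.1 x.2).im * (-Complex.I * B x.1 x.2).im) +
        ((A x.1 x.2).re ^ 2 + (A x.1 x.2).im ^ 2 + ε) ^ (p - 1) *
        ((Complex.I * B x.1 x.2).re * (-Complex.I * B x.1 x.2).re +
          (A x.1 x.2).re * (x.1 * b x.1 x.2).re +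
          (Complex.I * B x.1 x.2).im * (-Complex.I * B x.1 x.2).im +
          (A x.1 x.2).im * (x.1 * b x.1 x.2).im))) S := by
    refine continuousOn_const.mul ((((continuousOn_const.mul (cv (p - 2))).mul
      (((cre _ cA).mul (cre _ cIB)).add ((cim _ cA).mul (cim _ cIB)))).mul
      (((cre _ cA).mul (cre _ cnIB)).add ((cim _ cA).mul (cim _ cnIB)))).add
      ((cv (p - 1)).mul ((((cre _ cIB).mul (cre _ cnIB)).add ((cre _ cA).mul (cre _ csb))).add
        ((cim _ cIB).mul (cim _ cnIB)) |>.add ((cim _ cA).mul (cim _ csb)))))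
  -- second derivative integral is nonneg
  have key : ∀ s ∈ Set.Ioo (0 : ℝ) 1, 0 ≤ ∫ θ in (-Real.pi)..Real.pi,
      2 * p * (2 * (p - 1) * ((A s θ).re ^ 2 + (A s θ).im ^ 2 + ε) ^ (p - 2) *
        ((A s θ).re * (a s θ).re + (A s θ).im * (a s θ).im) *
        ((A s θ).re * (B s θ).re + (A s θ).im * (B s θ).im) +
        ((A s θ).re ^ 2 + (A s θ).im ^ 2 + ε) ^ (p - 1) *
        ((a s θ).re * (B s θ).re + (A s θ).re * (b s θ).re +
          (a s θ).im * (B s θ).im + (A s θ).im * (b s θ).im)) := by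
    intro s hs
    have hsU : s ∈ U := ⟨by linarith [hs.1], hs.2⟩
    have hFTC := intervalIntegral.integral_eq_sub_of_hasDerivAt (a := -Real.pi) (b := Real.pi)
      (fun θ _ => wd_deriv2 p ε hε (fun θ => A s θ) (fun θ => -Complex.I * B s θ)
        (Complex.I * B s θ) (s * b s θ) θ (dAθ s hsU θ) (dBθ s hsU θ))
      ((hsec _ cQ' s hsU).intervalIntegrable _ _)
    have hper : E (-Real.pi) = E Real.pi := by
      simp [hE, Complex.exp_neg, Complex.exp_pi_mul_I]
    have hAper : A s (-Real.pi) = A s Real.pi := by simp only [hA, hper]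
    have hBper : B s (-Real.pi) = B s Real.pi := by simp only [hB, hper]
    rw [hAper, hBper, sub_self] at hFTC
    refine nonneg_of_mul_nonneg_right (a := s) ?_ hs.1
    rw [← hFTC, ← intervalIntegral.integral_const_mul]
    refine intervalIntegral.integral_mono_on (by linarith [Real.pi_pos])
      ((hsec _ cQ' s hsU).intervalIntegrable _ _)
      (((hsec _ cP' s hsU).const_mul s).intervalIntegrable _ _) (fun θ _ => ?_)
    exact wd_alg p ε s hp hε (A s θ) (B s θ) (s * b s θ) (a s θ) (b s θ) (hsa s θ) rfl
  have hsub : ∀ s ∈ Set.Ico (0 : ℝ) 1, s ∈ U := fun s hs => ⟨by linarith [hs.1], hs.2⟩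
  have hsub' : ∀ s ∈ Set.Ioo (0 : ℝ) 1, s ∈ U := fun s hs => ⟨by linarith [hs.1], hs.2⟩
  have J : MonotoneOn (fun s => ∫ θ in (-Real.pi)..Real.pi,
      2 * p * ((A s θ).re ^ 2 + (A s θ).im ^ 2 + ε) ^ (p - 1) *
        ((A s θ).re * (B s θ).re + (A s θ).im * (B s θ).im)) (Set.Ico 0 1) := by
    refine monotoneOn_of_deriv_nonneg (convex_Ico 0 1)
      (fun s hs => (N2 s (hsub s hs)).continuousAt.continuousWithinAt) ?_ ?_
    · rw [interior_Ico]
      exact fun s hs => (N2 s (hsub' s hs)).differentiableAt.differentiableWithinAt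
    · rw [interior_Ico]
      intro s hs
      rw [(N2 s (hsub' s hs)).deriv]
      exact key s hs
  refine monotoneOn_of_deriv_nonneg (convex_Ico 0 1)
      (fun s hs => (N1 s (hsub s hs)).continuousAt.continuousWithinAt) ?_ ?_
  · rw [interior_Ico]
    exact fun s hs => (N1 s (hsub' s hs)).differentiableAt.differentiableWithinAt
  · rw [interior_Ico]
    intro s hs
    have hd := (N1 s (hsub' s hs)).deriv
    refine le_of_le_of_eq ?_ hd.symm
    refine nonneg_of_mul_nonneg_right (a := s) ?_ hs.1
    have h0 := J (a := 0) (b := s) ⟨le_rfl, one_pos⟩ ⟨hs.1.le, hs.2⟩ hs.1.le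
    have hB0 : ∀ θ, B 0 θ = 0 := fun θ => by simp [hB]
    simp only [hB0, Complex.zero_re, Complex.zero_im, mul_zero, add_zero,
      intervalIntegral.integral_zero] at h0
    refine h0.trans_eq ?_
    rw [← intervalIntegral.integral_const_mul]
    congr 1
    ext θ
    rw [← hsa s θ]
    simp
    ring

lemma wd_mono (q : ℝ) (hq : 0 < q)
    (f : ℂ → ℂ) (hf : DifferentiableOn ℂ f (ball (0 : ℂ) 1)) :
    MonotoneOn (fun s : ℝ => ∫⁻ θ in Set.Ioo (-Real.pi) Real.pi,
      ENNReal.ofReal (‖f (s * Complex.exp (θ * Complex.I))‖ ^ q)) (Set.Ico 0 1) := by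
  have hc : ∀ s ∈ Set.Ico (0 : ℝ) 1,
      Continuous (fun θ : ℝ => f (s * Complex.exp (θ * Complex.I))) := by
    intro s hs
    rw [← continuousOn_univ]
    refine hf.continuousOn.comp (by fun_prop) (fun θ _ => ?_)
    rw [mem_ball_zero_iff, norm_mul, Complex.norm_exp_ofReal_mul_I, mul_one, Complex.norm_real,
      Real.norm_eq_abs, abs_of_nonneg hs.1]
    exact hs.2
  have hlim : ∀ s ∈ Set.Ico (0 : ℝ) 1, Filter.Tendsto (fun ε : ℝ =>
      ∫ θ in (-Real.pi)..Real.pi, ((f (s * Complex.exp (θ * Complex.I))).re ^ 2 +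
        (f (s * Complex.exp (θ * Complex.I))).im ^ 2 + ε) ^ (q / 2)) (nhdsWithin 0 (Set.Ioi 0))
      (nhds (∫ θ in (-Real.pi)..Real.pi, ‖f (s * Complex.exp (θ * Complex.I))‖ ^ q)) := by
    intro s hs
    have h1 : Continuous (fun ε : ℝ =>
      ∫ θ in (-Real.pi)..Real.pi, ((f (s * Complex.exp (θ * Complex.I))).re ^ 2 +
        (f (s * Complex.exp (θ * Complex.I))).im ^ 2 + ε) ^ (q / 2)) := by
      apply intervalIntegral.continuous_parametric_intervalIntegral_of_continuous'
      refine Continuous.rpow_const ?_ (fun x => Or.inr (by positivity))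
      have h2 := (hc s hs).comp (continuous_snd (X := ℝ) (Y := ℝ))
      exact (((Complex.continuous_re.comp h2).pow 2).add
        ((Complex.continuous_im.comp h2).pow 2)).add continuous_fst
    have h3 := (h1.tendsto 0).mono_left (nhdsWithin_le_nhds (s := Set.Ioi 0))
    convert! h3 using 4 with θ
    rw [add_zero, ← Complex.normSq_add_mul_I, Complex.re_add_im, Complex.normSq_eq_norm_sq,
      ← Real.rpow_natCast, ← Real.rpow_mul (norm_nonneg _)]
    congr 1
    push_cast
    ring
  have hconv : ∀ s ∈ Set.Ico (0 : ℝ) 1, ∫⁻ θ in Set.Ioo (-Real.pi) Real.pi,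
      ENNReal.ofReal (‖f (s * Complex.exp (θ * Complex.I))‖ ^ q) =
      ENNReal.ofReal (∫ θ in (-Real.pi)..Real.pi, ‖f (s * Complex.exp (θ * Complex.I))‖ ^ q) := by
    intro s hs
    have hcq : Continuous (fun θ : ℝ => ‖f (s * Complex.exp (θ * Complex.I))‖ ^ q) :=
      (hc s hs).norm.rpow_const (fun _ => Or.inr hq.le)
    rw [intervalIntegral.integral_of_le (by linarith [Real.pi_pos]),
      ofReal_integral_eq_lintegral_ofReal, restrict_Ioo_eq_restrict_Ioc]
    · exact (hcq.intervalIntegrable (μ := volume) (-Real.pi) Real.pi).1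
    · exact Filter.Eventually.of_forall fun θ => by positivity
  intro s hs t ht hst
  simp only [hconv s hs, hconv t ht]
  apply ENNReal.ofReal_le_ofReal
  refine le_of_tendsto_of_tendsto (hlim s hs) (hlim t ht) ?_
  filter_upwards [self_mem_nhdsWithin] with ε hε
  exact wd_mono_eps (q / 2) ε (by positivity) hε f hf hs ht hst

lemma wd_radial (a : ℝ) (ha : 0 < a) (H : ℂ → ENNReal) (hH : Measurable H) :
    ∫⁻ z in ball (0 : ℂ) 1, ENNReal.ofReal (2 * a * (1 - ‖z‖ ^ 2) ^ (a - 1)) * H z =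
    ∫⁻ u in Set.Ioo (0 : ℝ) 1, ∫⁻ θ in Set.Ioo (-Real.pi) Real.pi,
      H ((Real.sqrt (1 - u ^ (1 / a)) : ℝ) * Complex.exp (θ * Complex.I)) := by
  set ψ : ℝ → ℝ := fun x => (1 - x ^ 2) ^ a with hψ
  have hψinv : ∀ x ∈ Set.Ioo (0 : ℝ) 1, Real.sqrt (1 - (ψ x) ^ (1 / a)) = x := by
    intro x hx
    have h1 : 0 ≤ 1 - x ^ 2 := by nlinarith [hx.1, hx.2]
    rw [hψ]
    simp only
    rw [← Real.rpow_mul h1, mul_one_div_cancel ha.ne', Real.rpow_one, sub_sub_cancel,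
      Real.sqrt_sq hx.1.le]
  have himg : ψ '' Set.Ioo 0 1 = Set.Ioo 0 1 := by
    ext u
    constructor
    · rintro ⟨x, hx, rfl⟩
      have h1 : 0 < 1 - x ^ 2 := by nlinarith [hx.1, hx.2]
      have h2 : 1 - x ^ 2 < 1 := by nlinarith [hx.1]
      exact ⟨Real.rpow_pos_of_pos h1 _, Real.rpow_lt_one h1.le h2 ha⟩
    · intro hu
      have h0 : 0 < u ^ (1 / a) := Real.rpow_pos_of_pos hu.1 _
      have h1 : u ^ (1 / a) < 1 := Real.rpow_lt_one hu.1.le hu.2 (by positivity)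
      refine ⟨Real.sqrt (1 - u ^ (1 / a)), ⟨Real.sqrt_pos.2 (by linarith), ?_⟩, ?_⟩
      · rw [Real.sqrt_lt' one_pos]; linarith
      · simp only [hψ]
        rw [Real.sq_sqrt (by linarith), sub_sub_cancel, ← Real.rpow_mul hu.1.le,
          one_div_mul_cancel ha.ne', Real.rpow_one]
  have hinj : Set.InjOn ψ (Set.Ioo 0 1) := by
    intro x hx y hy hxy
    rw [← hψinv x hx, ← hψinv y hy, hxy]
  have hder : ∀ x ∈ Set.Ioo (0 : ℝ) 1,
      HasDerivWithinAt ψ (-(2 * a * x * (1 - x ^ 2) ^ (a - 1))) (Set.Ioo 0 1) x := by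
    intro x hx
    have h1 : 0 < 1 - x ^ 2 := by nlinarith [hx.1, hx.2]
    have h2 := ((((hasDerivAt_id x).pow 2).const_sub 1).rpow_const (p := a)
      (Or.inl (by simpa using h1.ne'))).hasDerivWithinAt (s := Set.Ioo 0 1)
    convert! h2 using 1
    simp only [id, Pi.pow_apply]
    push_cast
    ring
  conv_rhs => rw [← himg]
  rw [lintegral_image_eq_lintegral_abs_deriv_mul measurableSet_Ioo hder hinj]
  rw [← lintegral_indicator measurableSet_ball, ← Complex.lintegral_comp_polarCoord_symm]
  have hsymm : ∀ p : ℝ × ℝ, Complex.polarCoord.symm p = p.1 * Complex.exp (p.2 * Complex.I) := by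
    intro p
    rw [Complex.polarCoord_symm_apply, Complex.exp_mul_I]
    simp
  have hmeas : Measurable (fun p : ℝ × ℝ => ENNReal.ofReal p.1 • (ball (0 : ℂ) 1).indicator
      (fun z => ENNReal.ofReal (2 * a * (1 - ‖z‖ ^ 2) ^ (a - 1)) * H z)
        (Complex.polarCoord.symm p)) := by
    simp only [hsymm, smul_eq_mul]
    refine Measurable.mul (by fun_prop) ?_
    refine Measurable.comp (g := (ball (0 : ℂ) 1).indicator
      (fun z => ENNReal.ofReal (2 * a * (1 - ‖z‖ ^ 2) ^ (a - 1)) * H z)) ?_ (by fun_prop)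
    exact Measurable.indicator (by fun_prop) measurableSet_ball
  rw [show polarCoord.target = Set.Ioi (0 : ℝ) ×ˢ Set.Ioo (-Real.pi) Real.pi from rfl,
    Measure.volume_eq_prod, setLIntegral_prod _ hmeas.aemeasurable]
  have hIoo : Set.Ioo (0 : ℝ) 1 = Set.Iio 1 ∩ Set.Ioi 0 := by
    ext x; simp [and_comm]
  rw [hIoo, ← setLIntegral_indicator measurableSet_Iio]
  refine setLIntegral_congr_fun measurableSet_Ioi (fun x hx => ?_)
  have hx0 : 0 < x := hx
  have hnorm : ∀ θ : ℝ, ‖(x : ℂ) * Complex.exp (θ * Complex.I)‖ = x := by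
    intro θ
    rw [norm_mul, Complex.norm_exp_ofReal_mul_I, mul_one, Complex.norm_real,
      Real.norm_eq_abs, abs_of_pos hx0]
  simp only [hsymm]
  by_cases hx1 : x < 1
  · rw [Set.indicator_of_mem (by exact hx1), hψinv x ⟨hx0, hx1⟩, ← lintegral_const_mul]
    · refine lintegral_congr fun θ => ?_
      rw [Set.indicator_of_mem (by rw [mem_ball_zero_iff, hnorm]; exact hx1), hnorm,
        smul_eq_mul, ← mul_assoc, ← ENNReal.ofReal_mul hx0.le, abs_neg, abs_of_nonneg]
      · congr 2; ring
      · have : 0 ≤ 1 - x ^ 2 := by nlinarith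
        have := Real.rpow_nonneg this (a - 1)
        positivity
    · exact hH.comp (by fun_prop)
  · rw [Set.indicator_of_notMem (by exact hx1), ← lintegral_zero (μ := volume.restrict (Set.Ioo (-Real.pi) Real.pi))]
    refine lintegral_congr fun θ => ?_
    rw [Set.indicator_of_notMem (by rw [mem_ball_zero_iff, hnorm]; exact hx1), smul_zero]

lemma wd_main (q a b : ℝ) (hq : 0 < q) (ha : 0 < a) (hab : a < b)
    (f : ℂ → ℂ) (hf : DifferentiableOn ℂ f (ball (0 : ℂ) 1)) (hm : Measurable f) :
    ∫⁻ z in ball (0 : ℂ) 1, ENNReal.ofReal (2 * a * (1 - ‖z‖ ^ 2) ^ (a - 1)) *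
      ENNReal.ofReal (‖f ((Real.sqrt (a / b) : ℂ) * z)‖ ^ q) ≤
    ∫⁻ z in ball (0 : ℂ) 1, ENNReal.ofReal (2 * b * (1 - ‖z‖ ^ 2) ^ (b - 1)) *
      ENNReal.ofReal (‖f z‖ ^ q) := by
  have hb : 0 < b := ha.trans hab
  rw [wd_radial a ha (fun z => ENNReal.ofReal (‖f ((Real.sqrt (a / b) : ℂ) * z)‖ ^ q))
    (by fun_prop), wd_radial b hb (fun z => ENNReal.ofReal (‖f z‖ ^ q)) (by fun_prop)]
  refine setLIntegral_mono' measurableSet_Ioo (fun u hu => ?_)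
  have ha0 : 0 < u ^ (1 / a) := Real.rpow_pos_of_pos hu.1 _
  have ha1 : u ^ (1 / a) < 1 := Real.rpow_lt_one hu.1.le hu.2 (by positivity)
  have hb0 : 0 < u ^ (1 / b) := Real.rpow_pos_of_pos hu.1 _
  have hb1 : u ^ (1 / b) < 1 := Real.rpow_lt_one hu.1.le hu.2 (by positivity)
  have hB := one_add_mul_self_le_rpow_one_add (s := u ^ (1 / b) - 1) (by linarith) (p := b / a)
    ((one_le_div ha).2 hab.le)
  rw [add_sub_cancel, ← Real.rpow_mul hu.1.le, show 1 / b * (b / a) = 1 / a by field_simp] at hB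
  have hle : a / b * (1 - u ^ (1 / a)) ≤ 1 - u ^ (1 / b) := by
    rw [div_mul_eq_mul_div, div_le_iff₀ hb]
    have h2 : a * (1 + b / a * (u ^ (1 / b) - 1)) ≤ a * u ^ (1 / a) :=
      mul_le_mul_of_nonneg_left hB ha.le
    have h3 : a * (1 + b / a * (u ^ (1 / b) - 1)) = a + b * (u ^ (1 / b) - 1) := by
      field_simp
    linarith
  have hs : Real.sqrt (a / b) * Real.sqrt (1 - u ^ (1 / a)) ≤ Real.sqrt (1 - u ^ (1 / b)) := by
    rw [← Real.sqrt_mul (by positivity)]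
    exact Real.sqrt_le_sqrt hle
  have ht : Real.sqrt (1 - u ^ (1 / b)) < 1 := by
    rw [Real.sqrt_lt' one_pos]; linarith
  have := wd_mono q hq f hf (a := Real.sqrt (a / b) * Real.sqrt (1 - u ^ (1 / a)))
    (b := Real.sqrt (1 - u ^ (1 / b))) ⟨by positivity, hs.trans_lt ht⟩ ⟨by positivity, ht⟩ hs
  simpa only [Complex.ofReal_mul, mul_assoc] using this

theorem weighted_dilation_inequality_any_q
    (q α β : ℝ) (hq : 0 < q) (hα : 1 < α) (hαβ : α < β)
    (f : ℂ → ℂ) (hf : DifferentiableOn ℂ f (ball (0 : ℂ) 1))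
    (hfq : IntegrableOn
      (fun z => ‖f z‖ ^ q * ((β - 1) / Real.pi * (1 - ‖z‖ ^ 2) ^ (β - 2)))
      (ball (0 : ℂ) 1)) :
    (α - 1) / Real.pi *
        ∫ z in ball (0 : ℂ) 1,
          ‖f ((Real.sqrt ((α - 1) / (β - 1)) : ℂ) * z)‖ ^ q * (1 - ‖z‖ ^ 2) ^ (α - 2) ≤
      (β - 1) / Real.pi *
        ∫ z in ball (0 : ℂ) 1, ‖f z‖ ^ q * (1 - ‖z‖ ^ 2) ^ (β - 2) := by
  have ha : 0 < α - 1 := by linarith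
  have hb : 0 < β - 1 := by linarith
  have hab : α - 1 < β - 1 := by linarith
  classical
  set g : ℂ → ℂ := (ball (0 : ℂ) 1).piecewise f 0 with hg
  have hgf : ∀ z ∈ ball (0 : ℂ) 1, g z = f z := fun z hz => Set.piecewise_eq_of_mem _ _ _ hz
  have hgm : Measurable g :=
    ContinuousOn.measurable_piecewise hf.continuousOn continuousOn_const measurableSet_ball
  have hgd : DifferentiableOn ℂ g (ball (0 : ℂ) 1) := hf.congr hgf
  have hmain := wd_main q (α - 1) (β - 1) hq ha hab g hgd hgm
  have hw : ∀ z ∈ ball (0 : ℂ) 1, 0 ≤ 1 - ‖z‖ ^ 2 := by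
    intro z hz
    rw [mem_ball_zero_iff] at hz
    nlinarith [norm_nonneg z]
  have hr : Real.sqrt ((α - 1) / (β - 1)) ≤ 1 :=
    Real.sqrt_le_one.2 ((div_le_one hb).2 hab.le)
  have hrz : ∀ z ∈ ball (0 : ℂ) 1, (Real.sqrt ((α - 1) / (β - 1)) : ℂ) * z ∈ ball (0 : ℂ) 1 := by
    intro z hz
    rw [mem_ball_zero_iff] at hz ⊢
    rw [norm_mul, Complex.norm_real, Real.norm_eq_abs, abs_of_nonneg (Real.sqrt_nonneg _)]
    exact (mul_le_of_le_one_left (norm_nonneg z) hr).trans_lt hz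
  -- rewriting the two sides
  have conv : ∀ (c γ : ℝ) (h : ℂ → ℂ), 0 < c → Measurable h →
      ∫⁻ z in ball (0 : ℂ) 1, ENNReal.ofReal (2 * c * (1 - ‖z‖ ^ 2) ^ γ) *
        ENNReal.ofReal (‖h z‖ ^ q) = ENNReal.ofReal (2 * c) *
      ∫⁻ z in ball (0 : ℂ) 1, ENNReal.ofReal (‖h z‖ ^ q * (1 - ‖z‖ ^ 2) ^ γ) := by
    intro c γ h hc hh
    rw [← lintegral_const_mul _ (by fun_prop)]
    refine setLIntegral_congr_fun measurableSet_ball (fun z hz => ?_)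
    have := Real.rpow_nonneg (hw z hz) γ
    rw [← ENNReal.ofReal_mul (by positivity), ← ENNReal.ofReal_mul (by positivity)]
    congr 1; ring
  have conv2 : ∀ (γ : ℝ) (h : ℂ → ℂ), Measurable h →
      ∫ z in ball (0 : ℂ) 1, ‖h z‖ ^ q * (1 - ‖z‖ ^ 2) ^ γ =
      (∫⁻ z in ball (0 : ℂ) 1, ENNReal.ofReal (‖h z‖ ^ q * (1 - ‖z‖ ^ 2) ^ γ)).toReal := by
    intro γ h hh
    refine integral_eq_lintegral_of_nonneg_ae ?_ (by
      exact Measurable.aestronglyMeasurable (by fun_prop))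
    filter_upwards [ae_restrict_mem measurableSet_ball] with z hz
    have := Real.rpow_nonneg (hw z hz) γ
    simp only [Pi.zero_apply]
    positivity
  have hint : IntegrableOn (fun z => ‖g z‖ ^ q * (1 - ‖z‖ ^ 2) ^ (β - 2)) (ball (0 : ℂ) 1) := by
    have h1 := hfq.const_mul (((β - 1) / Real.pi)⁻¹)
    refine IntegrableOn.congr_fun h1 (fun z hz => ?_) measurableSet_ball
    have := Real.pi_pos
    simp only [hgf z hz]
    field_simp
  have hfin : ∫⁻ z in ball (0 : ℂ) 1, ENNReal.ofReal (‖g z‖ ^ q * (1 - ‖z‖ ^ 2) ^ (β - 2)) ≠ ⊤ :=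
    (lt_of_le_of_lt (lintegral_mono fun z => Real.ofReal_le_enorm _) hint.2).ne
  rw [show α - 1 - 1 = α - 2 by ring, show β - 1 - 1 = β - 2 by ring,
    conv _ _ (fun z => g ((Real.sqrt ((α - 1) / (β - 1)) : ℂ) * z)) ha (by fun_prop),
    conv _ _ g hb hgm] at hmain
  have hL : ∫ z in ball (0 : ℂ) 1,
          ‖f ((Real.sqrt ((α - 1) / (β - 1)) : ℂ) * z)‖ ^ q * (1 - ‖z‖ ^ 2) ^ (α - 2) =
      ∫ z in ball (0 : ℂ) 1,
          ‖g ((Real.sqrt ((α - 1) / (β - 1)) : ℂ) * z)‖ ^ q * (1 - ‖z‖ ^ 2) ^ (α - 2) :=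
    setIntegral_congr_fun measurableSet_ball (fun z hz => by simp only [hgf _ (hrz z hz)])
  have hR : ∫ z in ball (0 : ℂ) 1, ‖f z‖ ^ q * (1 - ‖z‖ ^ 2) ^ (β - 2) =
      ∫ z in ball (0 : ℂ) 1, ‖g z‖ ^ q * (1 - ‖z‖ ^ 2) ^ (β - 2) :=
    setIntegral_congr_fun measurableSet_ball (fun z hz => by simp only [hgf _ hz])
  rw [hL, hR, conv2 _ (fun z => g ((Real.sqrt ((α - 1) / (β - 1)) : ℂ) * z)) (by fun_prop),
    conv2 _ g hgm]
  have := ENNReal.toReal_mono (ENNReal.mul_ne_top ENNReal.ofReal_ne_top hfin) hmain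
  rw [ENNReal.toReal_mul, ENNReal.toReal_mul, ENNReal.toReal_ofReal (by positivity),
    ENNReal.toReal_ofReal (by positivity)] at this
  rw [div_mul_eq_mul_div, div_mul_eq_mul_div]
  refine div_le_div_of_nonneg_right ?_ Real.pi_pos.le
  linarith
end
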